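/- arXiv:physics/0610130 — 7 statements merged into one kernel-verified Lean document; each statement's English description precedes it below -/
import Mathlib

section
/- Let k₁,k₂ > 0 and let U₁, U₂ : ℝ³ → ℂ be Schwartz functions, and let W be their two-frequency Wigner distribution. Then for every x ∈ ℝ³ the first moment in p satisfies ∫_{ℝ³} p · W(x,p) dp = −i [ (1/(2k₁)) (∇U₁)(x/k₁) · conj(U₂(x/k₂)) − (1/(2k₂)) U₁(x/k₁) · conj((∇U₂)(x/k₂)) ], as an identity of vectors in ℂ³ (the integral converging absolutely since W(x,·) is Schwartz in p). -/
open MeasureTheory Complex Filter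
open scoped RealInnerProductSpace Topology

noncomputable section


open scoped SchwartzMap FourierTransform LineDeriv in
theorem wigner_fourier_moment (g : SchwartzMap (EuclideanSpace ℝ (Fin 3)) ℂ) (j : Fin 3) :
    ∫ p : EuclideanSpace ℝ (Fin 3), ((p j : ℝ) : ℂ) *
      ((((2 * Real.pi) ^ 3 : ℝ)⁻¹ : ℝ) *
        ∫ y : EuclideanSpace ℝ (Fin 3), Complex.exp (-(Complex.I * (⟪p, y⟫ : ℂ))) * g y)
      = -Complex.I * fderiv ℝ g 0 (EuclideanSpace.single j 1) := by
  have hpi : (0 : ℝ) < 2 * Real.pi := by positivity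
  have h1 : fderiv ℝ g 0 (EuclideanSpace.single j 1)
      = ∫ ξ, 𝓕 (∂_{(EuclideanSpace.single j (1 : ℝ))} g) ξ := by
    rw [← SchwartzMap.lineDerivOp_apply_eq_fderiv]
    conv_lhs => rw [← FourierTransform.fourierInv_fourier_eq (F := 𝓢(EuclideanSpace ℝ (Fin 3), ℂ))
      (∂_{(EuclideanSpace.single j (1 : ℝ))} g)]
    rw [SchwartzMap.fourierInv_coe, Real.fourierInv_eq']
    simp
  have hg : (fun ξ : EuclideanSpace ℝ (Fin 3) =>
      inner ℝ ξ (EuclideanSpace.single j (1 : ℝ))).HasTemperateGrowth :=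
    ((innerSL ℝ).flip (EuclideanSpace.single j (1 : ℝ))).hasTemperateGrowth
  have h2 : ∀ ξ, 𝓕 (∂_{(EuclideanSpace.single j (1 : ℝ))} g) ξ
      = (2 * Real.pi * Complex.I) * ((ξ j : ℂ) * 𝓕 g ξ) := by
    intro ξ
    rw [SchwartzMap.fourier_lineDerivOp_eq, _root_.smul_apply,
      SchwartzMap.smulLeftCLM_apply_apply hg]
    simp [EuclideanSpace.inner_single_right]
  have h3 := Measure.integral_comp_smul (volume : Measure (EuclideanSpace ℝ (Fin 3)))
    (fun p : EuclideanSpace ℝ (Fin 3) => ((p j : ℝ) : ℂ) *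
      ((((2 * Real.pi) ^ 3 : ℝ)⁻¹ : ℝ) *
        ∫ y : EuclideanSpace ℝ (Fin 3), Complex.exp (-(Complex.I * (⟪p, y⟫ : ℂ))) * g y))
    (2 * Real.pi)
  have h4 : ∀ ξ : EuclideanSpace ℝ (Fin 3),
      (∫ y : EuclideanSpace ℝ (Fin 3),
        Complex.exp (-(Complex.I * (⟪(2 * Real.pi) • ξ, y⟫ : ℂ))) * g y) = 𝓕 g ξ := by
    intro ξ
    rw [SchwartzMap.fourier_coe, Real.fourier_eq']
    congr 1
    ext y
    rw [real_inner_smul_left, real_inner_comm, smul_eq_mul]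
    congr 2
    push_cast
    ring
  simp only [h4, finrank_euclideanSpace, Fintype.card_fin] at h3
  rw [abs_of_pos (by positivity)] at h3
  have h5 : ∀ ξ : EuclideanSpace ℝ (Fin 3),
      ((((2 * Real.pi) • ξ) j : ℝ) : ℂ) * ((((2 * Real.pi) ^ 3 : ℝ)⁻¹ : ℝ) * 𝓕 g ξ)
      = (((2 * Real.pi) ^ 3 : ℝ)⁻¹ : ℝ) • (-Complex.I *
          𝓕 (∂_{(EuclideanSpace.single j (1 : ℝ))} g) ξ) := by
    intro ξ
    rw [h2, Complex.real_smul]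
    simp only [PiLp.smul_apply, smul_eq_mul, Complex.ofReal_mul, Complex.ofReal_ofNat]
    linear_combination (-((((2 * Real.pi) ^ 3 : ℝ)⁻¹ : ℝ) : ℂ) * 2 * Real.pi * ξ j * 𝓕 g ξ)
      * (-Complex.I_mul_I)
  simp only [h5, integral_smul, integral_const_mul] at h3
  rw [h1]
  have hne : (((2 * Real.pi) ^ 3 : ℝ)⁻¹ : ℝ) ≠ 0 := by positivity
  exact (smul_right_injective ℂ hne h3).symm

/-- Affine precomposition of a Schwartz function. -/
theorem wigner_affine (U : SchwartzMap (EuclideanSpace ℝ (Fin 3)) ℂ)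
    (a : EuclideanSpace ℝ (Fin 3)) (c : ℝ) (hc : c ≠ 0) :
    ∃ V : SchwartzMap (EuclideanSpace ℝ (Fin 3)) ℂ, ∀ y, V y = U (a + c • y) := by
  refine ⟨SchwartzMap.compCLMOfContinuousLinearEquiv ℂ
    (ContinuousLinearEquiv.smulLeft (R₁ := ℝ) (M₁ := EuclideanSpace ℝ (Fin 3)) (Units.mk0 c hc))
    (SchwartzMap.compSubConstCLM ℂ (-a) U), fun y => ?_⟩
  simp [add_comm, Units.smul_def]

/-- The first moment in `p` of the two-frequency Wigner distribution:
for every `x`, componentwise in `j`,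
`∫ p_j W(x,p) dp = −i [ (2k₁)⁻¹ (∂_j U₁)(x/k₁) conj(U₂(x/k₂))
  − (2k₂)⁻¹ U₁(x/k₁) conj((∂_j U₂)(x/k₂)) ]`. -/
theorem two_frequency_wigner_first_moment
    (k₁ k₂ : ℝ) (hk₁ : 0 < k₁) (hk₂ : 0 < k₂)
    (U₁ U₂ : SchwartzMap (EuclideanSpace ℝ (Fin 3)) ℂ)
    (W : EuclideanSpace ℝ (Fin 3) → EuclideanSpace ℝ (Fin 3) → ℂ)
    (hW : ∀ x p : EuclideanSpace ℝ (Fin 3), W x p =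
      ((2 * Real.pi) ^ 3 : ℝ)⁻¹ *
        ∫ y : EuclideanSpace ℝ (Fin 3),
          Complex.exp (-(Complex.I * (⟪p, y⟫ : ℂ))) *
            U₁ (k₁⁻¹ • x + (2 * k₁)⁻¹ • y) *
            (starRingEnd ℂ) (U₂ (k₂⁻¹ • x - (2 * k₂)⁻¹ • y))) :
    ∀ x : EuclideanSpace ℝ (Fin 3), ∀ j : Fin 3,
      (∫ p : EuclideanSpace ℝ (Fin 3), ((p j : ℝ) : ℂ) * W x p)
        = -Complex.I *
            (((2 * k₁ : ℝ) : ℂ)⁻¹ *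
                fderiv ℝ (fun w => U₁ w) (k₁⁻¹ • x) (EuclideanSpace.single j 1) *
                (starRingEnd ℂ) (U₂ (k₂⁻¹ • x))
              - ((2 * k₂ : ℝ) : ℂ)⁻¹ * U₁ (k₁⁻¹ • x) *
                (starRingEnd ℂ)
                  (fderiv ℝ (fun w => U₂ w) (k₂⁻¹ • x) (EuclideanSpace.single j 1))) := by
  intro x j
  obtain ⟨V₁, hV₁⟩ := wigner_affine U₁ (k₁⁻¹ • x) (2 * k₁)⁻¹ (by positivity)
  obtain ⟨V₂, hV₂⟩ := wigner_affine U₂ (k₂⁻¹ • x) (-(2 * k₂)⁻¹) (by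
    rw [neg_ne_zero]; positivity)
  let C : ℂ →L[ℝ] ℂ := Complex.conjCLE.toContinuousLinearMap
  let g := SchwartzMap.pairing (ContinuousLinearMap.mul ℝ ℂ) V₁ (SchwartzMap.postcompCLM C V₂)
  have hg : ∀ y, g y = U₁ (k₁⁻¹ • x + (2 * k₁)⁻¹ • y) *
      (starRingEnd ℂ) (U₂ (k₂⁻¹ • x - (2 * k₂)⁻¹ • y)) := by
    intro y
    simp [g, C, hV₁, hV₂, sub_eq_add_neg]
  have hm := wigner_fourier_moment g j
  simp only [hg, ← mul_assoc] at hm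
  have e : (∫ p : EuclideanSpace ℝ (Fin 3), ((p j : ℝ) : ℂ) * W x p) =
      -Complex.I * fderiv ℝ g 0 (EuclideanSpace.single j 1) := by
    rw [← hm]
    congr 1
    ext p
    rw [hW]
    push_cast
    ring
  rw [e]
  congr 1
  have d1 : HasFDerivAt (fun y : EuclideanSpace ℝ (Fin 3) => U₁ (k₁⁻¹ • x + (2 * k₁)⁻¹ • y))
      ((fderiv ℝ U₁ (k₁⁻¹ • x)).comp ((2 * k₁)⁻¹ • ContinuousLinearMap.id ℝ _)) 0 := by
    have := U₁.hasFDerivAt (k₁⁻¹ • x + (2 * k₁)⁻¹ • 0)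
    have := this.comp (0 : EuclideanSpace ℝ (Fin 3))
      (((hasFDerivAt_id _).const_smul (2 * k₁)⁻¹).const_add (k₁⁻¹ • x))
    simpa [Function.comp_def] using this
  have d2 : HasFDerivAt (fun y : EuclideanSpace ℝ (Fin 3) => U₂ (k₂⁻¹ • x - (2 * k₂)⁻¹ • y))
      ((fderiv ℝ U₂ (k₂⁻¹ • x)).comp (-((2 * k₂)⁻¹ • ContinuousLinearMap.id ℝ _))) 0 := by
    have := U₂.hasFDerivAt (k₂⁻¹ • x - (2 * k₂)⁻¹ • 0)
    have := this.comp (0 : EuclideanSpace ℝ (Fin 3))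
      (((hasFDerivAt_id _).const_smul (2 * k₂)⁻¹).const_sub (k₂⁻¹ • x))
    simpa [Function.comp_def] using this
  have d3 := (C.hasFDerivAt (x := U₂ (k₂⁻¹ • x - (2 * k₂)⁻¹ • 0))).comp (0 : EuclideanSpace ℝ (Fin 3)) d2
  have d4 := d1.mul d3
  have hfun : (g : EuclideanSpace ℝ (Fin 3) → ℂ) = fun y =>
      U₁ (k₁⁻¹ • x + (2 * k₁)⁻¹ • y) * C (U₂ (k₂⁻¹ • x - (2 * k₂)⁻¹ • y)) := by
    ext y
    rw [hg]
    rfl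
  rw [hfun]
  refine (DFunLike.congr_fun d4.fderiv (EuclideanSpace.single j 1)).trans ?_
  simp [C]
  ring
end
end

section
/- Let ℏ > 0, ω₁,ω₂ ∈ ℝ, ν₁,ν₂ ∈ ℂ, let Ψ₁,Ψ₂ : ℝ³ → ℂ be Schwartz functions, and let V₁,V₂ : ℝ³ → ℂ admit the Fourier representations V_j(x) = ∫_{ℝ³} e^{i q·x} V̂_j(q) dq with V̂₁,V̂₂ continuous and integrable. Define f_j := (ℏ²/2)ΔΨ_j + (ν_j + V_j)Ψ_j + ω_j ℏ Ψ_j for j = 1,2 (so that Ψ_j solves the stationary Schrödinger equation (ℏ²/2)ΔΨ_j + (ν_j + V_j)Ψ_j = −ω_j ℏ Ψ_j + f_j). Define the ℏ-scaled two-frequency Wigner distribution W(x,p) = (2π)⁻³ ∫_{ℝ³} e^{−i p·y} Ψ₁(x + ℏy/2) conj(Ψ₂(x − ℏy/2)) dy, and F(x,p) = −(i/ℏ)(2π)⁻³ ∫ e^{−i p·y} f₁(x + ℏy/2) conj(Ψ₂(x − ℏy/2)) dy + (i/ℏ)(2π)⁻³ ∫ e^{−i p·y} Ψ₁(x + ℏy/2)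 conj(f₂(x − ℏy/2)) dy. Then for all x,p ∈ ℝ³: p·∇ₓW(x,p) + i(ω₂ − ω₁)W(x,p) + (i/ℏ)(conj(ν₂) − ν₁)W(x,p) = (i/ℏ) ∫ V̂₁(q) e^{i q·x} W(x, p − ℏq/2) dq − (i/ℏ) ∫ conj(V̂₂(q)) e^{−i q·x} W(x, p − ℏq/2) dq + F(x,p). -/
open MeasureTheory Complex Filter
open scoped RealInnerProductSpace Topology

noncomputable section

/-- The Laplacian of a function on `ℝ³`, as the sum of the repeated directional derivatives
along the coordinate directions. -/
def lap3 (U : EuclideanSpace ℝ (Fin 3) → ℂ) (x : EuclideanSpace ℝ (Fin 3)) : ℂ :=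
  ∑ j : Fin 3,
    fderiv ℝ (fun w => fderiv ℝ U w (EuclideanSpace.single j 1)) x (EuclideanSpace.single j 1)

abbrev E3 := EuclideanSpace ℝ (Fin 3)

/-- The unnormalised Wigner transform. -/
def wg (c : ℝ) (A B : SchwartzMap E3 ℂ) (x p : E3) : ℂ :=
  ∫ y : E3, Complex.exp (-(Complex.I * (⟪p, y⟫ : ℂ))) *
    A (x + c • y) * (starRingEnd ℂ) (B (x - c • y))

lemma norm_ph (p y : E3) : ‖Complex.exp (-(Complex.I * (⟪p, y⟫ : ℂ)))‖ = 1 := by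
  rw [Complex.norm_exp]; simp

lemma norm_ph' (p y : E3) : ‖Complex.exp (Complex.I * (⟪p, y⟫ : ℂ))‖ = 1 := by
  rw [Complex.norm_exp]; simp

lemma cont_ph (p : E3) : Continuous fun y : E3 => Complex.exp (-(Complex.I * (⟪p, y⟫ : ℂ))) := by
  fun_prop

lemma sch_bdd (B : SchwartzMap E3 ℂ) : ∃ C, ∀ x, ‖B x‖ ≤ C :=
  ⟨_, fun x => SchwartzMap.norm_le_seminorm ℝ B x⟩

lemma sch_fbdd (B : SchwartzMap E3 ℂ) : ∃ C, ∀ x, ‖fderiv ℝ B x‖ ≤ C :=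
  ⟨_, fun x => by
    have := SchwartzMap.norm_le_seminorm ℝ (SchwartzMap.fderivCLM ℝ E3 ℂ B) x
    rwa [SchwartzMap.fderivCLM_apply] at this⟩

lemma int_AB {c : ℝ} (hc : c ≠ 0) (A B : SchwartzMap E3 ℂ) (x : E3) :
    Integrable fun y : E3 => A (x + c • y) * (starRingEnd ℂ) (B (x - c • y)) := by
  have h1 : Integrable (fun y : E3 => A (x + c • y)) :=
    ((A.integrable (μ := volume)).comp_add_left x).comp_smul hc
  obtain ⟨C, hC⟩ := sch_bdd B
  refine h1.mul_bdd (c := C) ?_ ?_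
  · have := B.continuous
    exact (by fun_prop : Continuous fun y : E3 => (starRingEnd ℂ) (B (x - c • y))).aestronglyMeasurable
  · exact Eventually.of_forall fun y => by simpa using hC _

lemma int_ph {g : E3 → ℂ} (hg : Integrable g) (p : E3) :
    Integrable fun y : E3 => Complex.exp (-(Complex.I * (⟪p, y⟫ : ℂ))) * g y :=
  hg.bdd_mul (c := 1) (cont_ph p).aestronglyMeasurable
    (Eventually.of_forall fun y => (norm_ph p y).le)

lemma int_wg {c : ℝ} (hc : c ≠ 0) (A B : SchwartzMap E3 ℂ) (x p : E3) :
    Integrable fun y : E3 => Complex.exp (-(Complex.I * (⟪p, y⟫ : ℂ))) *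
      A (x + c • y) * (starRingEnd ℂ) (B (x - c • y)) := by
  simpa only [mul_assoc] using int_ph (int_AB hc A B x) p

open LineDeriv in
lemma wg_parts {c : ℝ} (hc : c ≠ 0) (A B : SchwartzMap E3 ℂ) (x p v : E3) :
    Complex.I * (⟪p, v⟫ : ℂ) * wg c A B x p
      = c * (wg c (lineDerivOp v A) B x p - wg c A (lineDerivOp v B) x p) := by
  have hg : ∀ y : E3, HasFDerivAt (fun y : E3 => A (x + c • y) * (starRingEnd ℂ) (B (x - c • y)))
      (A (x + c • y) • ((Complex.conjCLE : ℂ →L[ℝ] ℂ).comp ((fderiv ℝ B (x - c • y)).comp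
        (-(c • ContinuousLinearMap.id ℝ E3))))
      + (starRingEnd ℂ) (B (x - c • y)) • ((fderiv ℝ A (x + c • y)).comp
        (c • ContinuousLinearMap.id ℝ E3))) y := by
    intro y
    have i1 : HasFDerivAt (fun y : E3 => x + c • y) (c • ContinuousLinearMap.id ℝ E3) y :=
      ((hasFDerivAt_id y).const_smul c).const_add x
    have i2 : HasFDerivAt (fun y : E3 => x - c • y) (-(c • ContinuousLinearMap.id ℝ E3)) y :=
      ((hasFDerivAt_id y).const_smul c).const_sub x
    have h1 := (A.hasFDerivAt (x + c • y)).comp y i1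
    have h2 := (B.hasFDerivAt (x - c • y)).comp y i2
    have h3 := ((Complex.conjCLE : ℂ →L[ℝ] ℂ).hasFDerivAt (x := B (x - c • y))).comp y h2
    exact h1.mul h3
  have hf : ∀ y : E3, HasFDerivAt (fun y : E3 => Complex.exp (-(Complex.I * (⟪p, y⟫ : ℂ))))
      (Complex.exp (-(Complex.I * (⟪p, y⟫ : ℂ))) •
        (-(Complex.I • (Complex.ofRealCLM.comp (innerSL ℝ p))))) y := by
    intro y
    have := ((Complex.ofRealCLM.comp (innerSL ℝ p)).hasFDerivAt (x := y))
    exact ((this.const_mul Complex.I).neg).cexp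
  have key := integral_mul_fderiv_eq_neg_fderiv_mul_of_integrable (𝕜 := ℂ) (μ := (volume : Measure E3))
    (f := fun y : E3 => Complex.exp (-(Complex.I * (⟪p, y⟫ : ℂ))))
    (g := fun y : E3 => A (x + c • y) * (starRingEnd ℂ) (B (x - c • y))) (v := v)
    ?_ ?_ ?_ (fun y _ => (hf y).differentiableAt) (fun y _ => (hg y).differentiableAt)
  · have e1 : ∀ y, Complex.exp (-(Complex.I * (⟪p, y⟫ : ℂ))) *
        fderiv ℝ (fun y : E3 => A (x + c • y) * (starRingEnd ℂ) (B (x - c • y))) y v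
        = c * (Complex.exp (-(Complex.I * (⟪p, y⟫ : ℂ))) *
          (lineDerivOp v A) (x + c • y) * (starRingEnd ℂ) (B (x - c • y))
          - Complex.exp (-(Complex.I * (⟪p, y⟫ : ℂ))) *
          A (x + c • y) * (starRingEnd ℂ) ((lineDerivOp v B) (x - c • y))) := by
      intro y
      rw [(hg y).fderiv]
      simp [SchwartzMap.lineDerivOp_apply_eq_fderiv]
      ring
    have e2 : ∀ y, fderiv ℝ (fun y : E3 => Complex.exp (-(Complex.I * (⟪p, y⟫ : ℂ)))) y v *
        (A (x + c • y) * (starRingEnd ℂ) (B (x - c • y)))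
        = -(Complex.I * (⟪p, v⟫ : ℂ)) * (Complex.exp (-(Complex.I * (⟪p, y⟫ : ℂ))) *
          A (x + c • y) * (starRingEnd ℂ) (B (x - c • y))) := by
      intro y
      rw [(hf y).fderiv]
      simp
      ring
    simp only [e1, e2] at key
    rw [integral_const_mul, integral_const_mul, integral_sub (int_wg hc _ _ _ _)
      (int_wg hc _ _ _ _)] at key
    unfold wg
    rw [key]; ring
  · have : ∀ y, fderiv ℝ (fun y : E3 => Complex.exp (-(Complex.I * (⟪p, y⟫ : ℂ)))) y v *
        (A (x + c • y) * (starRingEnd ℂ) (B (x - c • y)))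
        = -(Complex.I * (⟪p, v⟫ : ℂ)) * (Complex.exp (-(Complex.I * (⟪p, y⟫ : ℂ))) *
          A (x + c • y) * (starRingEnd ℂ) (B (x - c • y))) := by
      intro y
      rw [(hf y).fderiv]
      simp
      ring
    simp only [this]
    exact (int_wg hc _ _ _ _).const_mul _
  · have e1 : ∀ y, Complex.exp (-(Complex.I * (⟪p, y⟫ : ℂ))) *
        fderiv ℝ (fun y : E3 => A (x + c • y) * (starRingEnd ℂ) (B (x - c • y))) y v
        = c * (Complex.exp (-(Complex.I * (⟪p, y⟫ : ℂ))) *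
          (lineDerivOp v A) (x + c • y) * (starRingEnd ℂ) (B (x - c • y))
          - Complex.exp (-(Complex.I * (⟪p, y⟫ : ℂ))) *
          A (x + c • y) * (starRingEnd ℂ) ((lineDerivOp v B) (x - c • y))) := by
      intro y
      rw [(hg y).fderiv]
      simp [SchwartzMap.lineDerivOp_apply_eq_fderiv]
      ring
    simp only [e1]
    exact ((int_wg hc _ _ _ _).sub (int_wg hc _ _ _ _)).const_mul _
  · exact int_ph (int_AB hc A B x) p

/-- Auxiliary convolution-type integral. -/
def hg (A B : SchwartzMap E3 ℂ) (x k : E3) : ℂ :=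
  ∫ z : E3, Complex.exp (-(Complex.I * (⟪k, z⟫ : ℂ))) * A z *
    (starRingEnd ℂ) (B ((2 : ℝ) • x - z))

lemma wg_eq {c : ℝ} (hc : c ≠ 0) (A B : SchwartzMap E3 ℂ) (x p : E3) :
    wg c A B x p = (|(c ^ 3)⁻¹| : ℝ) *
      (Complex.exp (Complex.I * (⟪c⁻¹ • p, x⟫ : ℂ)) * hg A B x (c⁻¹ • p)) := by
  have h1 := Measure.integral_comp_smul (volume : Measure E3) (fun w : E3 =>
    Complex.exp (-(Complex.I * (⟪c⁻¹ • p, w⟫ : ℂ))) *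
    A (x + w) * (starRingEnd ℂ) (B (x - w))) c
  have h2 := integral_add_left_eq_self (μ := (volume : Measure E3)) (fun z : E3 =>
    Complex.exp (Complex.I * (⟪c⁻¹ • p, x⟫ : ℂ)) * (Complex.exp (-(Complex.I * (⟪c⁻¹ • p, z⟫ : ℂ))) * A z *
    (starRingEnd ℂ) (B ((2 : ℝ) • x - z)))) x
  unfold wg hg
  rw [← integral_const_mul, ← h2]
  simp only [finrank_euclideanSpace, Fintype.card_fin, Complex.real_smul] at h1
  have h3 : ∀ w : E3, Complex.exp (Complex.I * (⟪c⁻¹ • p, x⟫ : ℂ)) *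
      (Complex.exp (-(Complex.I * (⟪c⁻¹ • p, x + w⟫ : ℂ))) * A (x + w) *
    (starRingEnd ℂ) (B ((2 : ℝ) • x - (x + w)))) = Complex.exp (-(Complex.I * (⟪c⁻¹ • p, w⟫ : ℂ))) *
    A (x + w) * (starRingEnd ℂ) (B (x - w)) := by
    intro w
    have : (2 : ℝ) • x - (x + w) = x - w := by rw [two_smul]; abel
    rw [this, inner_add_right, ← mul_assoc, ← mul_assoc, ← Complex.exp_add]
    congr 3
    push_cast; ring_nf
  simp only [h3]
  rw [← h1]
  congr 1; ext y
  have : ⟪c⁻¹ • p, c • y⟫ = ⟪p, y⟫ := by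
    rw [real_inner_smul_left, real_inner_smul_right]; field_simp
  rw [this]

open LineDeriv in
lemma hg_hasFDerivAt (A B : SchwartzMap E3 ℂ) (x k : E3) :
    ∃ L : E3 →L[ℝ] ℂ, HasFDerivAt (fun x => hg A B x k) L x ∧
      ∀ v, L v = 2 * hg A (lineDerivOp v B) x k := by
  obtain ⟨C, hC⟩ := sch_bdd B
  obtain ⟨C', hC'⟩ := sch_fbdd B
  have hAc := A.continuous
  have hBc := B.continuous
  have hB'c : Continuous (fderiv ℝ B) := (B.smooth 1).continuous_fderiv (by norm_num)
  have hcp := cont_ph k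
  let F' : E3 → E3 → E3 →L[ℝ] ℂ := fun x z =>
    (Complex.exp (-(Complex.I * (⟪k, z⟫ : ℂ))) * A z) •
      ((Complex.conjCLE : ℂ →L[ℝ] ℂ).comp ((fderiv ℝ B ((2 : ℝ) • x - z)).comp
        ((2 : ℝ) • ContinuousLinearMap.id ℝ E3)))
  have hF'c : Continuous (F' x) := by
    have : Continuous fun z => fderiv ℝ B ((2 : ℝ) • x - z) := hB'c.comp (by fun_prop)
    have h2 : Continuous fun z => (fderiv ℝ B ((2 : ℝ) • x - z)).comp
        ((2 : ℝ) • ContinuousLinearMap.id ℝ E3) := this.clm_comp continuous_const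
    exact (hcp.mul hAc).smul (continuous_const.clm_comp h2)
  have hF'b : ∀ z x, ‖F' x z‖ ≤ ‖A z‖ * (1 * (C' * 2)) := by
    intro z x
    simp only [F']
    rw [norm_smul, norm_mul, norm_ph, one_mul]
    gcongr
    refine (ContinuousLinearMap.opNorm_comp_le _ _).trans ?_
    gcongr
    · exact (ContinuousLinearMap.opNorm_le_bound _ zero_le_one fun w => by simp)
    · refine (ContinuousLinearMap.opNorm_comp_le _ _).trans ?_
      gcongr
      · exact (norm_nonneg _).trans (hC' 0)
      · exact hC' _
      · exact (ContinuousLinearMap.opNorm_le_bound _ zero_le_two fun w => by simp [norm_smul])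
  have hbi : Integrable fun z : E3 => ‖A z‖ * (1 * (C' * 2)) :=
    ((A.integrable (μ := volume)).norm).mul_const _
  have hint : ∀ x, Integrable fun z : E3 => Complex.exp (-(Complex.I * (⟪k, z⟫ : ℂ))) * A z *
      (starRingEnd ℂ) (B ((2 : ℝ) • x - z)) := by
    intro x
    refine (int_ph (A.integrable (μ := volume)) k).mul_bdd (c := C) ?_ ?_
    · exact (by fun_prop : Continuous fun z : E3 =>
        (starRingEnd ℂ) (B ((2 : ℝ) • x - z))).aestronglyMeasurable
    · exact Eventually.of_forall fun y => by simpa using hC _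
  refine ⟨∫ z, F' x z, ?_, ?_⟩
  · refine hasFDerivAt_integral_of_dominated_of_fderiv_le (𝕜 := ℝ) (F' := F') (s := Set.univ)
      (bound := fun z => ‖A z‖ * (1 * (C' * 2))) univ_mem
      (Eventually.of_forall fun x => (hint x).aestronglyMeasurable) (hint x)
      hF'c.aestronglyMeasurable (Eventually.of_forall fun z x _ => hF'b z x) hbi
      (Eventually.of_forall fun z x _ => ?_)
    have i2 : HasFDerivAt (fun x : E3 => (2 : ℝ) • x - z) ((2 : ℝ) • ContinuousLinearMap.id ℝ E3) x :=
      ((hasFDerivAt_id x).const_smul (2 : ℝ)).sub_const z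
    have h2 := (B.hasFDerivAt ((2 : ℝ) • x - z)).comp x i2
    have h3 := ((Complex.conjCLE : ℂ →L[ℝ] ℂ).hasFDerivAt (x := B ((2 : ℝ) • x - z))).comp x h2
    exact h3.const_mul (Complex.exp (-(Complex.I * (⟪k, z⟫ : ℂ))) * A z)
  · intro v
    have hF'i : Integrable (F' x) :=
      hbi.mono' hF'c.aestronglyMeasurable (Eventually.of_forall fun z => hF'b z x)
    rw [ContinuousLinearMap.integral_apply hF'i, hg, ← integral_const_mul]
    congr 1; ext z
    simp [F', SchwartzMap.lineDerivOp_apply_eq_fderiv]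
    ring

open LineDeriv in
lemma wg_hasFDerivAt {c : ℝ} (hc : c ≠ 0) (A B : SchwartzMap E3 ℂ) (x p : E3) :
    ∃ L : E3 →L[ℝ] ℂ, HasFDerivAt (fun x => wg c A B x p) L x ∧
      ∀ v, L v = wg c (lineDerivOp v A) B x p + wg c A (lineDerivOp v B) x p := by
  obtain ⟨L, hL, hLv⟩ := hg_hasFDerivAt A B x (c⁻¹ • p)
  have hf : HasFDerivAt (fun y : E3 => Complex.exp (Complex.I * (⟪c⁻¹ • p, y⟫ : ℂ)))
      (Complex.exp (Complex.I * (⟪c⁻¹ • p, x⟫ : ℂ)) •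
        (Complex.I • (Complex.ofRealCLM.comp (innerSL ℝ (c⁻¹ • p))))) x := by
    have := ((Complex.ofRealCLM.comp (innerSL ℝ (c⁻¹ • p))).hasFDerivAt (x := x))
    exact (this.const_mul Complex.I).cexp
  have hw := (hf.mul hL).const_mul ((|(c ^ 3)⁻¹| : ℝ) : ℂ)
  refine ⟨_, (hw.congr_of_eventuallyEq (Eventually.of_forall fun x => wg_eq hc A B x p)), ?_⟩
  intro v
  have hp := wg_parts hc A B x p v
  have hc' : (c : ℂ) ≠ 0 := by exact_mod_cast hc
  have : wg c (lineDerivOp v A) B x p = (c : ℂ)⁻¹ * (Complex.I * (⟪p, v⟫ : ℂ) * wg c A B x p)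
      + wg c A (lineDerivOp v B) x p := by
    rw [hp]; field_simp; ring
  rw [this, wg_eq hc A B, wg_eq hc A (lineDerivOp v B)]
  simp [hLv, real_inner_smul_left]
  ring

open LineDeriv in
lemma wg_transport {c : ℝ} (hc : c ≠ 0) (A B : SchwartzMap E3 ℂ) (x p : E3) :
    Complex.I * fderiv ℝ (fun x => wg c A B x p) x p
      = c * ∑ j : Fin 3, (wg c (lineDerivOp (EuclideanSpace.single j (1:ℝ))
            (lineDerivOp (EuclideanSpace.single j (1:ℝ)) A)) B x p
          - wg c A (lineDerivOp (EuclideanSpace.single j (1:ℝ))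
            (lineDerivOp (EuclideanSpace.single j (1:ℝ)) B)) x p) := by
  obtain ⟨L, hL, hLv⟩ := wg_hasFDerivAt hc A B x p
  rw [hL.fderiv]
  have hp : p = ∑ j : Fin 3, p j • (EuclideanSpace.single j (1:ℝ) : E3) := by
    ext i
    fin_cases i <;> simp [Fin.sum_univ_three]
  have hLp : L p = ∑ j : Fin 3, (p j : ℂ) * L (EuclideanSpace.single j (1:ℝ)) := by
    conv_lhs => rw [hp]
    simp
  rw [hLp, Finset.mul_sum, Finset.mul_sum]
  refine Finset.sum_congr rfl fun j _ => ?_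
  rw [hLv]
  have q1 := wg_parts hc (lineDerivOp (EuclideanSpace.single j (1:ℝ)) A) B x p
    (EuclideanSpace.single j (1:ℝ))
  have q2 := wg_parts hc A (lineDerivOp (EuclideanSpace.single j (1:ℝ)) B) x p
    (EuclideanSpace.single j (1:ℝ))
  have : ⟪p, (EuclideanSpace.single j (1:ℝ) : E3)⟫ = p j := by
    simp [EuclideanSpace.inner_single_right]
  rw [this] at q1 q2
  linear_combination q1 + q2

lemma pot_int {g h : E3 → ℂ} (hg : Integrable g) (hh : Integrable h) (c : ℝ) (x p : E3) :
    Integrable (Function.uncurry fun (y q : E3) => (Complex.exp (-(Complex.I * (⟪p, y⟫ : ℂ))) *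
      Complex.exp (Complex.I * (⟪q, x + c • y⟫ : ℂ))) * (g y * h q))
      ((volume : Measure E3).prod volume) := by
  have h1 := hg.mul_prod hh
  refine Integrable.bdd_mul (c := 1) h1 ?_ ?_
  · exact (by fun_prop : Continuous fun z : E3 × E3 => Complex.exp (-(Complex.I * (⟪p, z.1⟫ : ℂ))) *
      Complex.exp (Complex.I * (⟪z.2, x + c • z.1⟫ : ℂ))).aestronglyMeasurable
  · exact Eventually.of_forall fun z => by rw [norm_mul, norm_ph, norm_ph']; simp

lemma pot_swap {g h : E3 → ℂ} (hg : Integrable g) (hh : Integrable h) (c : ℝ) (x p : E3) :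
    Integrable (fun y : E3 => Complex.exp (-(Complex.I * (⟪p, y⟫ : ℂ))) *
      ((∫ q : E3, Complex.exp (Complex.I * (⟪q, x + c • y⟫ : ℂ)) * h q) * g y)) ∧
    ∫ y : E3, Complex.exp (-(Complex.I * (⟪p, y⟫ : ℂ))) *
      ((∫ q : E3, Complex.exp (Complex.I * (⟪q, x + c • y⟫ : ℂ)) * h q) * g y)
    = ∫ q : E3, h q * Complex.exp (Complex.I * (⟪q, x⟫ : ℂ)) *
      ∫ y : E3, Complex.exp (-(Complex.I * (⟪p - c • q, y⟫ : ℂ))) * g y := by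
  have hi := pot_int hg hh c x p
  have e : ∀ y : E3, ∫ q : E3, (Complex.exp (-(Complex.I * (⟪p, y⟫ : ℂ))) *
      Complex.exp (Complex.I * (⟪q, x + c • y⟫ : ℂ))) * (g y * h q)
      = Complex.exp (-(Complex.I * (⟪p, y⟫ : ℂ))) *
      ((∫ q : E3, Complex.exp (Complex.I * (⟪q, x + c • y⟫ : ℂ)) * h q) * g y) := by
    intro y
    rw [← integral_mul_const, ← integral_const_mul]
    congr 1; ext q; ring
  constructor
  · have := hi.integral_prod_left
    simpa only [Function.uncurry, e] using this
  · simp only [← e]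
    rw [integral_integral_swap hi]
    congr 1; ext q
    rw [← integral_const_mul]
    congr 1; ext y
    rw [← Complex.exp_add]
    have : h q * Complex.exp (Complex.I * (⟪q, x⟫ : ℂ)) *
      (Complex.exp (-(Complex.I * (⟪p - c • q, y⟫ : ℂ))) * g y)
      = (Complex.exp (Complex.I * (⟪q, x⟫ : ℂ)) * Complex.exp (-(Complex.I * (⟪p - c • q, y⟫ : ℂ))))
        * (g y * h q) := by ring
    rw [this, ← Complex.exp_add]
    congr 2
    rw [inner_add_right, inner_sub_left, real_inner_smul_right, real_inner_smul_left]
    push_cast; ring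

open LineDeriv in
lemma lap3_sch (A : SchwartzMap E3 ℂ) (x : E3) :
    lap3 (fun w => A w) x = ∑ j : Fin 3, (lineDerivOp (EuclideanSpace.single j (1:ℝ))
            (lineDerivOp (EuclideanSpace.single j (1:ℝ)) A) : SchwartzMap E3 ℂ) x := by
  unfold lap3
  refine Finset.sum_congr rfl fun j _ => ?_
  rw [SchwartzMap.lineDerivOp_apply_eq_fderiv]
  congr 2

/-- The two-frequency Wigner–Moyal equation for stationary Schrödinger
wave functions `(ℏ²/2)ΔΨ_j + (ν_j + V_j)Ψ_j = −ω_j ℏ Ψ_j + f_j`, for the ℏ-scaled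
two-frequency Wigner distribution
`W(x,p) = (2π)⁻³ ∫ e^{−i p·y} Ψ₁(x + ℏy/2) conj(Ψ₂(x − ℏy/2)) dy`:
`p·∇ₓW + i(ω₂ − ω₁)W + (i/ℏ)(conj ν₂ − ν₁)W
  = (i/ℏ)∫ V̂₁(q) e^{i q·x} W(x, p − ℏq/2) dq
    − (i/ℏ)∫ conj(V̂₂(q)) e^{−i q·x} W(x, p − ℏq/2) dq + F`. -/
theorem two_frequency_wigner_moyal_schroedinger
    (ℏ : ℝ) (hℏ : 0 < ℏ) (ω₁ ω₂ : ℝ) (ν₁ ν₂ : ℂ)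
    (Ψ₁ Ψ₂ : SchwartzMap (EuclideanSpace ℝ (Fin 3)) ℂ)
    (V₁ V₂ : EuclideanSpace ℝ (Fin 3) → ℂ)
    (Vh₁ Vh₂ : EuclideanSpace ℝ (Fin 3) → ℂ)
    (hVh₁c : Continuous Vh₁) (hVh₂c : Continuous Vh₂)
    (hVh₁i : Integrable Vh₁) (hVh₂i : Integrable Vh₂)
    (hV₁ : ∀ x, V₁ x = ∫ q : EuclideanSpace ℝ (Fin 3),
      Complex.exp (Complex.I * (⟪q, x⟫ : ℂ)) * Vh₁ q)
    (hV₂ : ∀ x, V₂ x = ∫ q : EuclideanSpace ℝ (Fin 3),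
      Complex.exp (Complex.I * (⟪q, x⟫ : ℂ)) * Vh₂ q)
    (f₁ f₂ : EuclideanSpace ℝ (Fin 3) → ℂ)
    (hf₁ : ∀ x, f₁ x = ((ℏ : ℂ) ^ 2 / 2) * lap3 (fun w => Ψ₁ w) x
      + (ν₁ + V₁ x) * Ψ₁ x + (ω₁ : ℂ) * (ℏ : ℂ) * Ψ₁ x)
    (hf₂ : ∀ x, f₂ x = ((ℏ : ℂ) ^ 2 / 2) * lap3 (fun w => Ψ₂ w) x
      + (ν₂ + V₂ x) * Ψ₂ x + (ω₂ : ℂ) * (ℏ : ℂ) * Ψ₂ x)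
    (W : EuclideanSpace ℝ (Fin 3) → EuclideanSpace ℝ (Fin 3) → ℂ)
    (hW : ∀ x p : EuclideanSpace ℝ (Fin 3), W x p =
      ((2 * Real.pi) ^ 3 : ℝ)⁻¹ *
        ∫ y : EuclideanSpace ℝ (Fin 3),
          Complex.exp (-(Complex.I * (⟪p, y⟫ : ℂ))) *
            Ψ₁ (x + (ℏ / 2) • y) * (starRingEnd ℂ) (Ψ₂ (x - (ℏ / 2) • y)))
    (F : EuclideanSpace ℝ (Fin 3) → EuclideanSpace ℝ (Fin 3) → ℂ)
    (hF : ∀ x p : EuclideanSpace ℝ (Fin 3), F x p =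
      -(Complex.I / (ℏ : ℂ)) * ((2 * Real.pi) ^ 3 : ℝ)⁻¹ *
          (∫ y : EuclideanSpace ℝ (Fin 3),
            Complex.exp (-(Complex.I * (⟪p, y⟫ : ℂ))) *
              f₁ (x + (ℏ / 2) • y) * (starRingEnd ℂ) (Ψ₂ (x - (ℏ / 2) • y)))
        + (Complex.I / (ℏ : ℂ)) * ((2 * Real.pi) ^ 3 : ℝ)⁻¹ *
          (∫ y : EuclideanSpace ℝ (Fin 3),
            Complex.exp (-(Complex.I * (⟪p, y⟫ : ℂ))) *
              Ψ₁ (x + (ℏ / 2) • y) * (starRingEnd ℂ) (f₂ (x - (ℏ / 2) • y)))) :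
    ∀ x p : EuclideanSpace ℝ (Fin 3),
      fderiv ℝ (fun x' => W x' p) x p
          + Complex.I * ((ω₂ : ℂ) - (ω₁ : ℂ)) * W x p
          + (Complex.I / (ℏ : ℂ)) * ((starRingEnd ℂ) ν₂ - ν₁) * W x p
        = (Complex.I / (ℏ : ℂ)) *
            (∫ q : EuclideanSpace ℝ (Fin 3),
              Vh₁ q * Complex.exp (Complex.I * (⟪q, x⟫ : ℂ)) * W x (p - (ℏ / 2) • q))
          - (Complex.I / (ℏ : ℂ)) *
            (∫ q : EuclideanSpace ℝ (Fin 3),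
              (starRingEnd ℂ) (Vh₂ q) * Complex.exp (-(Complex.I * (⟪q, x⟫ : ℂ))) *
                W x (p - (ℏ / 2) • q))
          + F x p := by
  intro x p
  have hc : ℏ / 2 ≠ 0 := by positivity
  have hℏ' : (ℏ : ℂ) ≠ 0 := by exact_mod_cast hℏ.ne'
  obtain ⟨c, hcdef⟩ : ∃ c : ℝ, c = ℏ / 2 := ⟨_, rfl⟩
  have hcc : (c : ℂ) = ℏ / 2 := by rw [hcdef]; push_cast; rfl
  rw [← hcdef] at hc
  simp only [← hcdef] at hW hF ⊢
  generalize ((((2 * Real.pi) ^ 3 : ℝ)⁻¹ : ℝ) : ℂ) = K at hW hF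
  have hW' : ∀ x p, W x p = K * wg c Ψ₁ Ψ₂ x p := hW
  obtain ⟨L, hL, -⟩ := wg_hasFDerivAt hc Ψ₁ Ψ₂ x p
  have hD : fderiv ℝ (fun x' => W x' p) x p = K * fderiv ℝ (fun x => wg c Ψ₁ Ψ₂ x p) x p := by
    simp only [hW']
    rw [(hL.const_mul K).fderiv, hL.fderiv]
    simp
  have hT := wg_transport hc Ψ₁ Ψ₂ x p
  have hgi := int_AB hc Ψ₁ Ψ₂ x
  -- potential terms
  obtain ⟨i1, s1⟩ := pot_swap hgi hVh₁i c x p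
  obtain ⟨i2, s2⟩ := pot_swap hgi (h := fun q => (starRingEnd ℂ) (Vh₂ q))
    (by simpa using (Complex.conjCLE : ℂ →L[ℝ] ℂ).integrable_comp hVh₂i) c (-x) p
  have hV₂' : ∀ y : E3, (starRingEnd ℂ) (V₂ (x - c • y)) =
      ∫ q : E3, Complex.exp (Complex.I * (⟪q, -x + c • y⟫ : ℂ)) * (starRingEnd ℂ) (Vh₂ q) := by
    intro y
    rw [hV₂, ← integral_conj]
    congr 1; ext q
    rw [map_mul, ← Complex.exp_conj]
    congr 2
    have : -x + c • y = -(x - c • y) := by abel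
    rw [this, inner_neg_right]
    simp
  simp only [← hV₁] at i1 s1
  simp only [← hV₂'] at i2 s2
  -- expand f₁
  have F1 : (∫ y : E3, Complex.exp (-(Complex.I * (⟪p, y⟫ : ℂ))) *
        f₁ (x + c • y) * (starRingEnd ℂ) (Ψ₂ (x - c • y)))
      = ((ℏ : ℂ) ^ 2 / 2) * (∑ j : Fin 3, wg c (LineDeriv.lineDerivOp (EuclideanSpace.single j (1:ℝ))
            (LineDeriv.lineDerivOp (EuclideanSpace.single j (1:ℝ)) Ψ₁)) Ψ₂ x p)
        + (ν₁ + ω₁ * ℏ) * wg c Ψ₁ Ψ₂ x p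
        + ∫ q : E3, Vh₁ q * Complex.exp (Complex.I * (⟪q, x⟫ : ℂ)) * wg c Ψ₁ Ψ₂ x (p - c • q) := by
    simp only [wg, mul_assoc]
    simp only [mul_assoc] at s1
    rw [← s1]
    rw [← integral_finsetSum _ (fun j _ => int_ph (int_AB hc _ _ _) p), ← integral_const_mul,
      ← integral_const_mul, ← integral_add, ← integral_add]
    · congr 1; ext y
      rw [hf₁, lap3_sch, ← Finset.mul_sum, ← Finset.sum_mul]
      ring
    · exact ((integrable_finsetSum _ (fun j _ => int_ph (int_AB hc _ _ _) p)).const_mul _).add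
        ((int_ph hgi p).const_mul _)
    · exact i1
    · exact (integrable_finsetSum _ (fun j _ => int_ph (int_AB hc _ _ _) p)).const_mul _
    · exact (int_ph hgi p).const_mul _
  have F2 : (∫ y : E3, Complex.exp (-(Complex.I * (⟪p, y⟫ : ℂ))) *
        Ψ₁ (x + c • y) * (starRingEnd ℂ) (f₂ (x - c • y)))
      = ((ℏ : ℂ) ^ 2 / 2) * (∑ j : Fin 3, wg c Ψ₁ (LineDeriv.lineDerivOp (EuclideanSpace.single j (1:ℝ))
            (LineDeriv.lineDerivOp (EuclideanSpace.single j (1:ℝ)) Ψ₂)) x p)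
        + ((starRingEnd ℂ) ν₂ + ω₂ * ℏ) * wg c Ψ₁ Ψ₂ x p
        + ∫ q : E3, (starRingEnd ℂ) (Vh₂ q) * Complex.exp (-(Complex.I * (⟪q, x⟫ : ℂ))) *
          wg c Ψ₁ Ψ₂ x (p - c • q) := by
    simp only [inner_neg_right, Complex.ofReal_neg, mul_neg] at s2
    simp only [wg, mul_assoc]
    simp only [mul_assoc] at s2
    rw [← s2]
    rw [← integral_finsetSum _ (fun j _ => int_ph (int_AB hc _ _ _) p), ← integral_const_mul,
      ← integral_const_mul, ← integral_add, ← integral_add]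
    · congr 1; ext y
      rw [hf₂, lap3_sch, ← Finset.mul_sum, ← Finset.mul_sum]
      simp only [map_add, map_mul, map_sum, map_div₀, map_pow, Complex.conj_ofReal, map_ofNat]
      ring
    · exact ((integrable_finsetSum _ (fun j _ => int_ph (int_AB hc _ _ _) p)).const_mul _).add
        ((int_ph hgi p).const_mul _)
    · exact i2
    · exact (integrable_finsetSum _ (fun j _ => int_ph (int_AB hc _ _ _) p)).const_mul _
    · exact (int_ph hgi p).const_mul _
  have P1 : (∫ q : E3, Vh₁ q * Complex.exp (Complex.I * (⟪q, x⟫ : ℂ)) * W x (p - c • q))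
      = K * ∫ q : E3, Vh₁ q * Complex.exp (Complex.I * (⟪q, x⟫ : ℂ)) *
        wg c Ψ₁ Ψ₂ x (p - c • q) := by
    rw [← integral_const_mul]
    congr 1; ext q; rw [hW']; ring
  have P2 : (∫ q : E3, (starRingEnd ℂ) (Vh₂ q) * Complex.exp (-(Complex.I * (⟪q, x⟫ : ℂ))) *
        W x (p - c • q))
      = K * ∫ q : E3, (starRingEnd ℂ) (Vh₂ q) * Complex.exp (-(Complex.I * (⟪q, x⟫ : ℂ))) *
        wg c Ψ₁ Ψ₂ x (p - c • q) := by
    rw [← integral_const_mul]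
    congr 1; ext q; rw [hW']; ring
  rw [hF, F1, F2, P1, P2, hD, hW']
  rw [Finset.sum_sub_distrib, hcc] at hT
  generalize (∫ q : E3, Vh₁ q * Complex.exp (Complex.I * (⟪q, x⟫ : ℂ)) *
        wg c Ψ₁ Ψ₂ x (p - c • q)) = Q1
  generalize (∫ q : E3, (starRingEnd ℂ) (Vh₂ q) * Complex.exp (-(Complex.I * (⟪q, x⟫ : ℂ))) *
        wg c Ψ₁ Ψ₂ x (p - c • q)) = Q2
  have hT' : fderiv ℝ (fun x => wg c Ψ₁ Ψ₂ x p) x p = -Complex.I *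
      (Complex.I * fderiv ℝ (fun x => wg c Ψ₁ Ψ₂ x p) x p) := by
    rw [← mul_assoc, neg_mul, Complex.I_mul_I]; ring
  rw [hT', hT]
  field_simp
  ring
end
end

section
/- (Sokhotski–Plemelj limit) Let f : ℝ → ℂ be a Schwartz function. Then the principal value PV∫ f(ξ)/ξ dξ := lim_{δ→0⁺} ∫_{|ξ|≥δ} f(ξ)/ξ dξ exists, and lim_{η→0⁺} ∫_ℝ f(ξ)/(η + iξ) dξ = π f(0) − i · PV∫ f(ξ)/ξ dξ. -/
open MeasureTheory Complex Filter
open scoped Topology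

noncomputable section

lemma sp_symm (F : ℝ → ℂ) (hF : Integrable F) :
    ∫ x, F x = ∫ x, (1 / 2 : ℂ) * (F x + F (-x)) := by
  rw [integral_const_mul, integral_add hF hF.comp_neg, integral_neg_eq_self]
  ring

lemma sp_bound (f : SchwartzMap ℝ ℂ) :
    ∃ C : ℝ, ∀ x : ℝ, ‖(f x - f (-x)) / (x : ℂ)‖ ≤ C * (1 + x ^ 2)⁻¹ := by
  obtain ⟨K, hK⟩ := (SchwartzMap.derivCLM ℝ ℂ f).decay 0 0
  obtain ⟨C₂, hC₂⟩ := f.decay 2 0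
  simp only [pow_zero, one_mul, norm_iteratedFDeriv_zero, SchwartzMap.derivCLM_apply] at hK hC₂
  replace hK := hK.2
  replace hC₂ := hC₂.2
  have hK0 : 0 ≤ K := (norm_nonneg _).trans (hK 0)
  have hC0 : 0 ≤ C₂ := le_trans (by positivity) (hC₂ 0)
  have hL : ∀ x : ℝ, ‖f x - f (-x)‖ ≤ K * (2 * |x|) := by
    intro x
    have h := Convex.norm_image_sub_le_of_norm_deriv_le (𝕜 := ℝ) (f := f) (s := Set.univ)
      (x := -x) (y := x) (C := K)
      (fun y _ => f.differentiableAt) (fun y _ => hK y) convex_univ trivial trivial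
    have e : ‖x - -x‖ = 2 * |x| := by
      rw [sub_neg_eq_add, ← two_mul, norm_mul]; simp
    rwa [e] at h
  refine ⟨4 * K + 4 * C₂, fun x => ?_⟩
  by_cases hx : x = 0
  · subst hx; simp; positivity
  have hx' : 0 < |x| := abs_pos.2 hx
  rw [norm_div, Complex.norm_real, Real.norm_eq_abs, ← div_eq_mul_inv,
    div_le_div_iff₀ hx' (by positivity)]
  rcases le_total |x| 1 with h1 | h1
  · have : x ^ 2 ≤ 1 := by rw [← sq_abs]; nlinarith
    calc _ ≤ (K * (2 * |x|)) * 2 := by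
          gcongr
          · exact hL x
          · linarith
      _ ≤ _ := by nlinarith
  · have h2 : 1 ≤ x ^ 2 := by rw [← sq_abs]; nlinarith
    have a := hC₂ x
    have b := hC₂ (-x)
    rw [norm_neg] at b
    rw [Real.norm_eq_abs, sq_abs] at a b
    have c := norm_sub_le (f x) (f (-x))
    calc _ ≤ (‖f x‖ + ‖f (-x)‖) * (2 * x ^ 2) := by
          gcongr
          linarith
      _ ≤ 4 * C₂ := by nlinarith
      _ ≤ (4 * K + 4 * C₂) * 1 := by linarith
      _ ≤ _ := by gcongr

lemma sp_pv (f : SchwartzMap ℝ ℂ) :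
    Tendsto (fun δ : ℝ => ∫ ξ in {ξ : ℝ | δ ≤ |ξ|}, f ξ / (ξ : ℂ)) (𝓝[>] 0)
      (𝓝 (∫ x : ℝ, (1 / 2 : ℂ) * ((f x - f (-x)) / (x : ℂ)))) := by
  obtain ⟨C, hC⟩ := sp_bound f
  have hms : ∀ δ : ℝ, MeasurableSet {ξ : ℝ | δ ≤ |ξ|} := fun δ =>
    measurableSet_le measurable_const (by fun_prop)
  have hmf : Measurable f := f.continuous.measurable
  have key : ∀ δ : ℝ, 0 < δ → ∫ ξ in {ξ : ℝ | δ ≤ |ξ|}, f ξ / (ξ : ℂ) =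
      ∫ x, Set.indicator {ξ : ℝ | δ ≤ |ξ|}
        (fun x : ℝ => (1 / 2 : ℂ) * ((f x - f (-x)) / (x : ℂ))) x := by
    intro δ hδ
    rw [← integral_indicator (hms δ), sp_symm]
    · congr 1
      ext x
      by_cases h : δ ≤ |x|
      · have h' : δ ≤ |-x| := by rwa [abs_neg]
        simp only [Set.indicator, Set.mem_ofPred_eq, h, h', if_true]
        push_cast
        rw [div_neg]; ring
      · have h' : ¬ δ ≤ |-x| := by rwa [abs_neg]
        simp only [Set.indicator, Set.mem_ofPred_eq, h, h', if_false]
        simp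
    · refine Integrable.mono' (f.integrable.norm.const_mul δ⁻¹)
        ((Measurable.indicator (by fun_prop) (hms δ)).aestronglyMeasurable)
        (Eventually.of_forall fun x => ?_)
      by_cases h : δ ≤ |x|
      · simp only [Set.indicator, Set.mem_ofPred_eq, h, if_true]
        rw [norm_div, Complex.norm_real, Real.norm_eq_abs, div_eq_inv_mul]
        gcongr
      · simp only [Set.indicator, Set.mem_ofPred_eq, h, if_false, norm_zero]
        positivity
  refine Tendsto.congr' (f₁ := fun δ : ℝ => ∫ x, Set.indicator {ξ : ℝ | δ ≤ |ξ|}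
        (fun x : ℝ => (1 / 2 : ℂ) * ((f x - f (-x)) / (x : ℂ))) x) ?_ ?_
  · filter_upwards [self_mem_nhdsWithin] with δ hδ using (key δ hδ).symm
  refine tendsto_integral_filter_of_dominated_convergence (fun x => C * (1 + x ^ 2)⁻¹) ?_ ?_
    (integrable_inv_one_add_sq.const_mul C) ?_
  · exact Eventually.of_forall fun δ =>
      (Measurable.indicator (by fun_prop) (hms δ)).aestronglyMeasurable
  · refine Eventually.of_forall fun δ => Eventually.of_forall fun x => ?_
    refine (norm_indicator_le_norm_self _ _).trans ?_
    rw [norm_mul]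
    have := hC x
    have h0 := norm_nonneg ((f x - f (-x)) / (x : ℂ))
    norm_num at this h0 ⊢
    linarith
  · refine Eventually.of_forall fun x => ?_
    by_cases hx : x = 0
    · subst hx
      refine tendsto_const_nhds.congr' ?_
      filter_upwards with δ
      simp [Set.indicator]
    · refine tendsto_const_nhds.congr' ?_
      have : ∀ᶠ δ : ℝ in 𝓝[>] 0, δ < |x| :=
        nhdsWithin_le_nhds (Iio_mem_nhds (abs_pos.2 hx))
      filter_upwards [this] with δ hδ
      simp [Set.indicator, hδ.le]

lemma sp_delta (f : SchwartzMap ℝ ℂ) :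
    Tendsto (fun η : ℝ => ∫ ξ : ℝ, ((η / (η ^ 2 + ξ ^ 2) : ℝ) : ℂ) * f ξ) (𝓝[>] 0)
      (𝓝 ((Real.pi : ℂ) * f 0)) := by
  have hmf : Measurable f := f.continuous.measurable
  obtain ⟨K, hK⟩ := f.decay 0 0
  simp only [pow_zero, one_mul, norm_iteratedFDeriv_zero] at hK
  replace hK := hK.2
  have key : ∀ η : ℝ, 0 < η → ∫ ξ : ℝ, ((η / (η ^ 2 + ξ ^ 2) : ℝ) : ℂ) * f ξ =
      ∫ u : ℝ, (((1 + u ^ 2)⁻¹ : ℝ) : ℂ) * f (η * u) := by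
    intro η hη
    have h := Measure.integral_comp_mul_left
      (fun ξ : ℝ => ((η / (η ^ 2 + ξ ^ 2) : ℝ) : ℂ) * f ξ) η
    rw [abs_of_pos (inv_pos.2 hη)] at h
    have h2 : ∫ ξ : ℝ, ((η / (η ^ 2 + ξ ^ 2) : ℝ) : ℂ) * f ξ =
        (η : ℝ) • ∫ u : ℝ, ((η / (η ^ 2 + (η * u) ^ 2) : ℝ) : ℂ) * f (η * u) := by
      rw [h, smul_smul, mul_inv_cancel₀ hη.ne', one_smul]
    rw [h2, ← integral_smul]
    congr 1
    ext u
    rw [Complex.real_smul, ← mul_assoc, ← Complex.ofReal_mul]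
    congr 2
    have : 1 + u ^ 2 ≠ 0 := by positivity
    have : η ^ 2 + (η * u) ^ 2 ≠ 0 := by positivity
    field_simp
  refine Tendsto.congr' (f₁ := fun η : ℝ =>
    ∫ u : ℝ, (((1 + u ^ 2)⁻¹ : ℝ) : ℂ) * f (η * u)) ?_ ?_
  · filter_upwards [self_mem_nhdsWithin] with η hη using (key η hη).symm
  have e : (Real.pi : ℂ) * f 0 = ∫ u : ℝ, (((1 + u ^ 2)⁻¹ : ℝ) : ℂ) * f 0 := by
    rw [integral_mul_const, integral_complex_ofReal, integral_univ_inv_one_add_sq]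
  rw [e]
  refine tendsto_integral_filter_of_dominated_convergence (fun x => K * (1 + x ^ 2)⁻¹) ?_ ?_
    (integrable_inv_one_add_sq.const_mul K) ?_
  · exact Eventually.of_forall fun δ => Measurable.aestronglyMeasurable (by fun_prop)
  · refine Eventually.of_forall fun η => Eventually.of_forall fun x => ?_
    have : (0 : ℝ) ≤ (1 + x ^ 2)⁻¹ := by positivity
    rw [norm_mul, Complex.norm_real, Real.norm_of_nonneg this, mul_comm]
    gcongr
    exact hK _
  · refine Eventually.of_forall fun x => ?_
    have : Continuous fun η : ℝ => (((1 + x ^ 2)⁻¹ : ℝ) : ℂ) * f (η * x) := by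
      have := f.continuous
      fun_prop
    have h := this.tendsto 0
    simp only [zero_mul] at h
    exact h.mono_left nhdsWithin_le_nhds

lemma sp_int (f : SchwartzMap ℝ ℂ) (g : ℝ → ℝ) (hg : Continuous g) (C : ℝ)
    (h : ∀ x, |g x| ≤ C) : Integrable fun x => (g x : ℂ) * f x := by
  have hf := f.continuous
  refine Integrable.mono' (f.integrable.norm.const_mul C)
    (Continuous.aestronglyMeasurable (by fun_prop)) (Eventually.of_forall fun x => ?_)
  rw [norm_mul, Complex.norm_real, Real.norm_eq_abs]
  gcongr
  exact h x

lemma sp_int1 (f : SchwartzMap ℝ ℂ) (η : ℝ) (hη : 0 < η) :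
    Integrable fun ξ : ℝ => ((η / (η ^ 2 + ξ ^ 2) : ℝ) : ℂ) * f ξ := by
  have hp : ∀ x : ℝ, 0 < η ^ 2 + x ^ 2 := fun x => by positivity
  refine sp_int f (fun ξ => η / (η ^ 2 + ξ ^ 2)) ?_ (1 / η) fun x => ?_
  · exact Continuous.div (by fun_prop) (by fun_prop) fun x => (hp x).ne'
  · rw [abs_of_nonneg (by positivity), div_le_div_iff₀ (hp x) hη]
    nlinarith [sq_nonneg x]

lemma sp_int2 (f : SchwartzMap ℝ ℂ) (η : ℝ) (hη : 0 < η) :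
    Integrable fun ξ : ℝ => ((ξ / (η ^ 2 + ξ ^ 2) : ℝ) : ℂ) * f ξ := by
  have hp : ∀ x : ℝ, 0 < η ^ 2 + x ^ 2 := fun x => by positivity
  refine sp_int f (fun ξ => ξ / (η ^ 2 + ξ ^ 2)) ?_ (1 / η) fun x => ?_
  · exact Continuous.div (by fun_prop) (by fun_prop) fun x => (hp x).ne'
  · rw [abs_div, abs_of_pos (hp x), div_le_div_iff₀ (hp x) hη, ← sq_abs x]
    nlinarith [sq_nonneg (η - |x|), sq_nonneg (η + |x|)]

lemma sp_odd (f : SchwartzMap ℝ ℂ) :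
    Tendsto (fun η : ℝ => ∫ ξ : ℝ, ((ξ / (η ^ 2 + ξ ^ 2) : ℝ) : ℂ) * f ξ) (𝓝[>] 0)
      (𝓝 (∫ x : ℝ, (1 / 2 : ℂ) * ((f x - f (-x)) / (x : ℂ)))) := by
  obtain ⟨C, hC⟩ := sp_bound f
  have hmf : Measurable f := f.continuous.measurable
  refine Tendsto.congr' (f₁ := fun η : ℝ => ∫ x : ℝ, ((x ^ 2 / (η ^ 2 + x ^ 2) : ℝ) : ℂ) *
    ((1 / 2 : ℂ) * ((f x - f (-x)) / (x : ℂ)))) ?_ ?_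
  · filter_upwards [self_mem_nhdsWithin] with η hη
    rw [sp_symm _ (sp_int2 f η hη)]
    congr 1
    ext x
    by_cases hx : x = 0
    · subst hx; simp
    have hx' : (x : ℂ) ≠ 0 := by exact_mod_cast hx
    push_cast
    rw [neg_sq]
    field_simp
    ring
  refine tendsto_integral_filter_of_dominated_convergence (fun x => C * (1 + x ^ 2)⁻¹) ?_ ?_
    (integrable_inv_one_add_sq.const_mul C) ?_
  · exact Eventually.of_forall fun δ => Measurable.aestronglyMeasurable (by fun_prop)
  · refine Eventually.of_forall fun η => Eventually.of_forall fun x => ?_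
    have h1 : x ^ 2 / (η ^ 2 + x ^ 2) ≤ 1 :=
      div_le_one_of_le₀ (by nlinarith [sq_nonneg η]) (by positivity)
    have h2 : 0 ≤ x ^ 2 / (η ^ 2 + x ^ 2) := by positivity
    rw [norm_mul, norm_mul, Complex.norm_real, Real.norm_of_nonneg h2]
    have h3 : ‖(1 / 2 : ℂ)‖ = 1 / 2 := by norm_num
    rw [h3]
    have := hC x
    have h0 := norm_nonneg ((f x - f (-x)) / (x : ℂ))
    nlinarith
  · refine Eventually.of_forall fun x => ?_
    by_cases hx : x = 0
    · subst hx; simp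
    · have h : Tendsto (fun η : ℝ => x ^ 2 / (η ^ 2 + x ^ 2)) (𝓝[>] 0) (𝓝 1) := by
        have hc : ContinuousAt (fun η : ℝ => x ^ 2 / (η ^ 2 + x ^ 2)) 0 :=
          ContinuousAt.div (by fun_prop) (by fun_prop) (by positivity)
        have h := hc.tendsto
        have e : x ^ 2 / ((0 : ℝ) ^ 2 + x ^ 2) = 1 := by field_simp; simp
        rw [e] at h
        exact h.mono_left nhdsWithin_le_nhds
      have h' := ((Complex.continuous_ofReal.tendsto 1).comp h).mul_const
        ((1 / 2 : ℂ) * ((f x - f (-x)) / (x : ℂ)))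
      rw [Complex.ofReal_one, one_mul] at h'
      exact h'

/-- **Sokhotski–Plemelj limit.** For a Schwartz function `f : ℝ → ℂ`, the
principal value `PV∫ f(ξ)/ξ dξ = lim_{δ→0⁺} ∫_{|ξ|≥δ} f(ξ)/ξ dξ` exists, and
`lim_{η→0⁺} ∫ f(ξ)/(η + iξ) dξ = π f(0) − i PV∫ f(ξ)/ξ dξ`. -/
theorem sokhotski_plemelj (f : SchwartzMap ℝ ℂ) :
    ∃ L : ℂ,
      Tendsto (fun δ : ℝ => ∫ ξ in {ξ : ℝ | δ ≤ |ξ|}, f ξ / (ξ : ℂ)) (𝓝[>] 0) (𝓝 L) ∧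
      Tendsto (fun η : ℝ => ∫ ξ : ℝ, f ξ / ((η : ℂ) + Complex.I * (ξ : ℂ))) (𝓝[>] 0)
        (𝓝 ((Real.pi : ℂ) * f 0 - Complex.I * L)) := by
  refine ⟨_, sp_pv f, ?_⟩
  refine ((sp_delta f).sub ((sp_odd f).const_mul Complex.I)).congr' ?_
  filter_upwards [self_mem_nhdsWithin] with η hη
  have hη : 0 < η := hη
  rw [← integral_const_mul, ← integral_sub (sp_int1 f η hη) ((sp_int2 f η hη).const_mul _)]
  congr 1
  ext ξ
  have h1 : (η : ℂ) + Complex.I * ξ ≠ 0 := by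
    intro h
    have := congrArg Complex.re h
    simp at this
    exact hη.ne' this
  have h2 : (η : ℂ) ^ 2 + (ξ : ℂ) ^ 2 ≠ 0 := by
    have : η ^ 2 + ξ ^ 2 ≠ 0 := by positivity
    exact_mod_cast this
  push_cast
  rw [eq_div_iff h1]
  field_simp
  ring_nf
  rw [Complex.I_sq]
  ring
end
end

section
/- Let k > 0, θ ≥ 0, let Φ : ℝ³ → [0,∞) be a continuous Schwartz function, let ψ : ℝ³ → ℂ be a smooth compactly supported function, and let W̄ : ℝ³ × ℝ³ → ℂ be a Schwartz function. Then lim_{ε→0⁺} ε ∫_{ℝ³} Φ(q) ∫_{ℝ³} | ∫_{ℝ³} ψ(p) · W̄(x, p − θq/(2k)) / (ε + i p·q/k) dp |² dx dq = 0. (This expresses that in three dimensions the first corrector of the multiscale expansion, tested against ψ in the momentum variable, vanishes in the mean-square sense as ε→0, the key point being that |q|⁻² is an integrable singularity in ℝ³.) -/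
open MeasureTheory Complex Filter
open scoped RealInnerProductSpace Topology

noncomputable section

lemma den_re_le (ε k s : ℝ) (hε : 0 < ε) :
    ε ≤ ‖(ε : ℂ) + Complex.I * (s : ℂ) / (k : ℂ)‖ := by
  have h := Complex.abs_re_le_norm ((ε : ℂ) + Complex.I * (s : ℂ) / (k : ℂ))
  have h2 : ((ε : ℂ) + Complex.I * (s : ℂ) / (k : ℂ)).re = ε := by
    rw [mul_div_assoc, ← Complex.ofReal_div]
    simp
  rw [h2, abs_of_pos hε] at h
  exact h

lemma den_im_le (ε k s : ℝ) (hk : 0 < k) :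
    |s| / k ≤ ‖(ε : ℂ) + Complex.I * (s : ℂ) / (k : ℂ)‖ := by
  have h := Complex.abs_im_le_norm ((ε : ℂ) + Complex.I * (s : ℂ) / (k : ℂ))
  have h2 : ((ε : ℂ) + Complex.I * (s : ℂ) / (k : ℂ)).im = s / k := by
    rw [mul_div_assoc, ← Complex.ofReal_div]
    simp
  rw [h2, abs_div, abs_of_pos hk] at h
  exact h

lemma den_inv_le (ε k s : ℝ) (hε : 0 < ε) (hk : 0 < k) (hs : s ≠ 0) :
    ‖(ε : ℂ) + Complex.I * (s : ℂ) / (k : ℂ)‖⁻¹ ≤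
      ε ^ (-(1/4 : ℝ)) * (|s| / k) ^ (-(3/4 : ℝ)) := by
  have h1 := den_re_le ε k s hε
  have h2 := den_im_le ε k s hk
  set N := ‖(ε : ℂ) + Complex.I * (s : ℂ) / (k : ℂ)‖
  have hN : 0 < N := hε.trans_le h1
  have hs' : 0 < |s| / k := div_pos (abs_pos.2 hs) hk
  have e : N⁻¹ = N ^ (-(1/4 : ℝ)) * N ^ (-(3/4 : ℝ)) := by
    rw [← Real.rpow_add hN, ← Real.rpow_neg_one]; norm_num
  rw [e]
  gcongr ?_ * ?_
  · exact Real.rpow_le_rpow_of_nonpos hε h1 (by norm_num)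
  · exact Real.rpow_le_rpow_of_nonpos hs' h2 (by norm_num)

def f0 (ε k a R : ℝ) : ℝ → ℝ := (Metric.ball (0:ℝ) R).indicator
  (fun t => ‖(ε : ℂ) + Complex.I * ((a * t : ℝ) : ℂ) / (k : ℂ)‖⁻¹)

lemma rpow_intOn (R : ℝ) :
    IntegrableOn (fun t : ℝ => |t| ^ (-(3/4 : ℝ))) (Metric.ball (0:ℝ) R) := by
  have := (integrableOn_fun_norm_addHaar (E := ℝ) (μ := volume)
    (f := fun y : ℝ => y ^ (-(3/4 : ℝ))) (r := R)).2 ?_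
  · simpa using this
  · simp only [Module.finrank_self, Nat.sub_self, pow_zero, one_smul]
    rcases le_or_gt R 0 with h | h
    · simp [Set.Ioo_eq_empty_of_le h]
    · exact (intervalIntegral.integrableOn_Ioo_rpow_iff h).2 (by norm_num)

lemma f0_int (ε k a R : ℝ) (hε : 0 < ε) : Integrable (f0 ε k a R) := by
  unfold f0
  rw [integrable_indicator_iff measurableSet_ball]
  have hne : ∀ t : ℝ, ‖(ε : ℂ) + Complex.I * ((a * t : ℝ) : ℂ) / (k : ℂ)‖ ≠ 0 :=
    fun t => (hε.trans_le (den_re_le ε k (a*t) hε)).ne'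
  have hc : Continuous (fun t : ℝ => ‖(ε : ℂ) + Complex.I * ((a * t : ℝ) : ℂ) / (k : ℂ)‖⁻¹) := by
    refine Continuous.inv₀ ?_ hne
    fun_prop
  exact (hc.continuousOn.integrableOn_compact (isCompact_closedBall (0:ℝ) R)).mono_set
    Metric.ball_subset_closedBall

lemma f0_le (ε k a R : ℝ) (hε : 0 < ε) (hk : 0 < k) (ha : 0 < a) :
    ∫ t, f0 ε k a R t ≤ ε ^ (-(1/4 : ℝ)) * (a / k) ^ (-(3/4 : ℝ)) *
      ∫ t in Metric.ball (0:ℝ) R, |t| ^ (-(3/4 : ℝ)) := by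
  rw [← integral_const_mul]
  have h0 := f0_int ε k a R hε
  unfold f0 at h0 ⊢
  rw [integral_indicator measurableSet_ball]
  rw [integrable_indicator_iff measurableSet_ball] at h0
  refine integral_mono_ae h0 ((rpow_intOn R).const_mul _) ?_
  have : ∀ᵐ t : ℝ, t ≠ 0 := by simp [ae_iff]
  refine ae_restrict_of_ae ?_
  filter_upwards [this] with t ht
  refine (den_inv_le ε k (a*t) hε hk (by positivity)).trans (le_of_eq ?_)
  rw [mul_assoc, ← Real.mul_rpow (by positivity) (by positivity), abs_mul, abs_of_pos ha]
  ring_nf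

def fi (ε k a R : ℝ) (i : Fin 3) : ℝ → ℝ :=
  if i = 0 then f0 ε k a R else (Metric.ball (0:ℝ) R).indicator (fun _ => 1)

def hh (ε k a R : ℝ) (p : EuclideanSpace ℝ (Fin 3)) : ℝ := ∏ i, fi ε k a R i (p i)

lemma hh_int (ε k a R : ℝ) (hε : 0 < ε) : Integrable (hh ε k a R) := by
  have h : Integrable (fun x : Fin 3 → ℝ => ∏ i, fi ε k a R i (x i)) := by
    refine Integrable.fintype_prod fun i => ?_
    unfold fi
    split_ifs
    · exact f0_int ε k a R hε
    · rw [integrable_indicator_iff measurableSet_ball]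
      exact integrableOn_const measure_ball_lt_top.ne
  exact (PiLp.volume_preserving_ofLp (Fin 3)).integrable_comp_of_integrable h

lemma hh_integral (ε k a R : ℝ) (hR : 0 < R) :
    ∫ p, hh ε k a R p = (∫ t, f0 ε k a R t) * (2 * R) ^ 2 := by
  have h := (PiLp.volume_preserving_ofLp (Fin 3)).integral_comp
    (MeasurableEquiv.toLp 2 (Fin 3 → ℝ)).symm.measurableEmbedding
    (fun x : Fin 3 → ℝ => ∏ i, fi ε k a R i (x i))
  have h2 := integral_fintype_prod_volume_eq_prod (ι := Fin 3) (fi ε k a R)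
  unfold hh
  rw [h, h2, Fin.prod_univ_three]
  have e : ∫ t, (Metric.ball (0:ℝ) R).indicator (fun _ => (1:ℝ)) t = 2 * R := by
    rw [integral_indicator measurableSet_ball]
    simp [Measure.real, hR.le]
  simp only [fi, if_true, Fin.reduceEq, if_false, one_ne_zero]
  rw [e]
  ring

lemma exists_rot (q : EuclideanSpace ℝ (Fin 3)) :
    ∃ L : EuclideanSpace ℝ (Fin 3) ≃ₗᵢ[ℝ] EuclideanSpace ℝ (Fin 3),
      ∀ p, ⟪p, q⟫ = ‖q‖ * (L p) 0 := by
  let w : EuclideanSpace ℝ (Fin 3) := EuclideanSpace.single 0 ‖q‖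
  have hw : ‖q‖ = ‖w‖ := by simp [w]
  refine ⟨Submodule.reflection (ℝ ∙ (q - w))ᗮ, fun p => ?_⟩
  have h := Submodule.reflection_sub hw
  rw [← LinearIsometryEquiv.inner_map_map (Submodule.reflection (ℝ ∙ (q - w))ᗮ) p q, h]
  simp [w, EuclideanSpace.inner_single_right]

lemma inner_bound (ε k R Cψ M : ℝ) (hε : 0 < ε) (hk : 0 < k) (hR : 0 < R) (hM : 0 ≤ M)
    (hCψ : 0 ≤ Cψ)
    (q : EuclideanSpace ℝ (Fin 3)) (hq : q ≠ 0) (ψ g : EuclideanSpace ℝ (Fin 3) → ℂ)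
    (hψ : ∀ p, ‖ψ p‖ ≤ Cψ) (hψ0 : ∀ p, ψ p ≠ 0 → ‖p‖ < R) (hg : ∀ p, ‖g p‖ ≤ M) :
    ‖∫ p, ψ p * g p / ((ε : ℂ) + Complex.I * (⟪p, q⟫ : ℂ) / (k : ℂ))‖ ≤
      Cψ * M * ((ε ^ (-(1/4 : ℝ)) * (‖q‖ / k) ^ (-(3/4 : ℝ)) *
      ∫ t in Metric.ball (0:ℝ) R, |t| ^ (-(3/4 : ℝ))) * (2 * R) ^ 2) := by
  obtain ⟨L, hL⟩ := exists_rot q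
  have hi : Integrable (fun p => hh ε k ‖q‖ R (L p)) :=
    L.measurePreserving.integrable_comp_of_integrable (hh_int ε k ‖q‖ R hε)
  refine (norm_integral_le_of_norm_le (hi.const_mul (Cψ * M)) (.of_forall fun p => ?_)).trans ?_
  · by_cases h : ψ p = 0
    · simp only [h, zero_mul, zero_div, norm_zero]
      refine mul_nonneg (by positivity) (Finset.prod_nonneg fun i _ => ?_)
      unfold fi f0
      split_ifs <;> exact Set.indicator_nonneg (fun _ _ => by positivity) _
    · have hp : ∀ i, (L p) i ∈ Metric.ball (0:ℝ) R := fun i => by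
        rw [mem_ball_zero_iff]
        refine (PiLp.norm_apply_le (L p) i).trans_lt ?_
        rw [L.norm_map]; exact hψ0 p h
      have e : hh ε k ‖q‖ R (L p) = ‖(ε : ℂ) + Complex.I * (⟪p, q⟫ : ℂ) / (k : ℂ)‖⁻¹ := by
        unfold hh
        rw [Fin.prod_univ_three]
        simp only [fi, if_true, Fin.reduceEq, if_false, one_ne_zero, f0]
        rw [Set.indicator_of_mem (hp 0), Set.indicator_of_mem (hp 1), Set.indicator_of_mem (hp 2),
          hL p, mul_one, mul_one]
      rw [e, norm_div, norm_mul, div_eq_mul_inv]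
      gcongr
      · exact hψ p
      · exact hg p
  · rw [integral_const_mul]
    rw [L.measurePreserving.integral_comp L.toHomeomorph.measurableEmbedding,
      hh_integral _ _ _ _ hR]
    gcongr
    exact f0_le ε k ‖q‖ R hε hk (norm_pos_iff.2 hq)

lemma q_int : Integrable (fun q : EuclideanSpace ℝ (Fin 3) =>
    ‖q‖ ^ (-(3/2 : ℝ)) * (1 + ‖q‖) ^ (-(4 : ℝ))) := by
  refine (integrable_fun_norm_addHaar (E := EuclideanSpace ℝ (Fin 3)) (μ := volume)
    (f := fun y : ℝ => y ^ (-(3/2 : ℝ)) * (1 + y) ^ (-(4 : ℝ)))).2 ?_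
  have h1 : Integrable (fun y : ℝ => (1 + ‖y‖) ^ (-(2:ℝ))) :=
    integrable_one_add_norm (by norm_num)
  refine (h1.integrableOn (s := Set.Ioi 0)).mono' ?_ ?_
  · apply Measurable.aestronglyMeasurable
    fun_prop
  · refine (ae_restrict_iff' measurableSet_Ioi).2 (.of_forall fun y hy => ?_)
    have hy : 0 < y := hy
    simp only [finrank_euclideanSpace, Fintype.card_fin, smul_eq_mul, Real.norm_eq_abs]
    rw [abs_of_nonneg (by positivity), abs_of_pos hy]
    have e1 : y ^ (3 - 1) * (y ^ (-(3/2 : ℝ)) * (1 + y) ^ (-(4 : ℝ))) =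
        y ^ (1/2 : ℝ) * (1 + y) ^ (-(4 : ℝ)) := by
      rw [← mul_assoc, ← Real.rpow_natCast, ← Real.rpow_add hy]
      norm_num
    have e2 : (1 + y) ^ (-(2 : ℝ)) = (1 + y) ^ (2 : ℝ) * (1 + y) ^ (-(4 : ℝ)) := by
      rw [← Real.rpow_add (by positivity)]; norm_num
    rw [e1, e2]
    gcongr
    calc y ^ (1/2 : ℝ) ≤ (1 + y) ^ (1/2 : ℝ) := by gcongr; linarith
      _ ≤ (1 + y) ^ (2 : ℝ) := Real.rpow_le_rpow_of_exponent_le (by linarith) (by norm_num)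

lemma schwartz_decay {E F : Type*} [NormedAddCommGroup E] [NormedSpace ℝ E]
    [NormedAddCommGroup F] [NormedSpace ℝ F] (f : SchwartzMap E F) (n : ℕ) :
    ∃ C, 0 ≤ C ∧ ∀ x, ‖f x‖ ≤ C * (1 + ‖x‖) ^ (-(n : ℝ)) := by
  refine ⟨2 ^ n * (Finset.Iic (n, 0)).sup (fun m => SchwartzMap.seminorm ℝ m.1 m.2) f,
    by positivity, fun x => ?_⟩
  have h := SchwartzMap.one_add_le_sup_seminorm_apply (𝕜 := ℝ) (m := (n, 0)) (k := n) (n := 0)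
    le_rfl le_rfl f x
  rw [norm_iteratedFDeriv_zero] at h
  rw [Real.rpow_neg (by positivity), Real.rpow_natCast, ← div_eq_mul_inv,
    le_div_iff₀ (by positivity), mul_comm]
  exact h

/-- Weak vanishing of the first corrector in three dimensions: for `k > 0`,
`θ ≥ 0`, a nonnegative Schwartz `Φ`, a smooth compactly supported test function `ψ`, and
Schwartz `W̄`,
`lim_{ε→0⁺} ε ∫ Φ(q) ∫ |∫ ψ(p) W̄(x, p − θq/(2k))/(ε + i p·q/k) dp|² dx dq = 0`. -/
theorem corrector_weak_vanishing
    (k θ : ℝ) (hk : 0 < k) (hθ : 0 ≤ θ)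
    (Φ : SchwartzMap (EuclideanSpace ℝ (Fin 3)) ℝ) (hΦ : ∀ q, 0 ≤ Φ q)
    (ψ : EuclideanSpace ℝ (Fin 3) → ℂ)
    (hψs : ContDiff ℝ (⊤ : ℕ∞) ψ) (hψc : HasCompactSupport ψ)
    (Wb : SchwartzMap (EuclideanSpace ℝ (Fin 3) × EuclideanSpace ℝ (Fin 3)) ℂ) :
    Tendsto
      (fun ε : ℝ =>
        ε * ∫ q : EuclideanSpace ℝ (Fin 3),
          Φ q *
            ∫ x : EuclideanSpace ℝ (Fin 3),
              ‖∫ p : EuclideanSpace ℝ (Fin 3),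
                  ψ p * Wb (x, p - (θ / (2 * k)) • q) /
                    ((ε : ℂ) + Complex.I * (⟪p, q⟫ : ℂ) / (k : ℂ))‖ ^ 2)
      (𝓝[>] 0) (𝓝 0) := by
  obtain ⟨Cψ, hCψ⟩ := hψs.continuous.bounded_above_of_compact_support hψc
  have hCψ0 : 0 ≤ Cψ := (norm_nonneg _).trans (hCψ 0)
  obtain ⟨R, hR, hψR⟩ : ∃ R : ℝ, 0 < R ∧ ∀ p, ψ p ≠ 0 → ‖p‖ < R := by
    obtain ⟨R, hR, h⟩ := hψc.isCompact.isBounded.subset_ball_lt 0 0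
    exact ⟨R, hR, fun p hp => mem_ball_zero_iff.1 (h (subset_tsupport ψ hp))⟩
  obtain ⟨CΦ, hCΦ0, hCΦ⟩ := schwartz_decay Φ 4
  obtain ⟨CW, hCW0, hCW⟩ := schwartz_decay Wb 2
  set T := ∫ t in Metric.ball (0:ℝ) R, |t| ^ (-(3/4 : ℝ)) with hT
  have hT0 : 0 ≤ T := integral_nonneg fun t => by positivity
  set J := ∫ x : EuclideanSpace ℝ (Fin 3), (1 + ‖x‖) ^ (-(4 : ℝ)) with hJ
  have hJi : Integrable (fun x : EuclideanSpace ℝ (Fin 3) => (1 + ‖x‖) ^ (-(4 : ℝ))) :=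
    integrable_one_add_norm (by norm_num)
  set Q := ∫ q : EuclideanSpace ℝ (Fin 3), ‖q‖ ^ (-(3/2 : ℝ)) * (1 + ‖q‖) ^ (-(4 : ℝ)) with hQ
  set A := Cψ * CW * (k ^ (3/4 : ℝ) * T * (2 * R) ^ 2) with hA
  have hA0 : 0 ≤ A := by positivity
  have key : ∀ ε : ℝ, 0 < ε → ∀ q : EuclideanSpace ℝ (Fin 3), q ≠ 0 →
      ∫ x : EuclideanSpace ℝ (Fin 3),
              ‖∫ p : EuclideanSpace ℝ (Fin 3),
                  ψ p * Wb (x, p - (θ / (2 * k)) • q) /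
                    ((ε : ℂ) + Complex.I * (⟪p, q⟫ : ℂ) / (k : ℂ))‖ ^ 2
      ≤ A ^ 2 * ε ^ (-(1/2 : ℝ)) * ‖q‖ ^ (-(3/2 : ℝ)) * J := by
    intro ε hε q hq
    have hq' : 0 < ‖q‖ := norm_pos_iff.2 hq
    rw [hJ, ← integral_const_mul]
    refine integral_mono_of_nonneg (.of_forall fun x => by positivity) (hJi.const_mul _)
      (.of_forall fun x => ?_)
    have hx : 0 < 1 + ‖x‖ := by positivity
    have hb := inner_bound ε k R Cψ (CW * (1 + ‖x‖) ^ (-(2 : ℝ))) hε hk hR (by positivity) hCψ0 q hq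
      ψ (fun p => Wb (x, p - (θ / (2 * k)) • q)) hCψ hψR (fun p => by
        refine (hCW _).trans ?_
        push_cast
        gcongr ?_ * ?_
        refine Real.rpow_le_rpow_of_nonpos hx ?_ (by norm_num)
        gcongr
        exact norm_fst_le (x, p - (θ / (2 * k)) • q))
    rw [← hT] at hb
    refine (pow_le_pow_left₀ (norm_nonneg _) hb 2).trans (le_of_eq ?_)
    have e1 : (‖q‖ / k) ^ (-(3/4 : ℝ)) = ‖q‖ ^ (-(3/4 : ℝ)) * k ^ (3/4 : ℝ) := by
      rw [Real.div_rpow hq'.le hk.le, Real.rpow_neg hk.le]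
      field_simp
    have e2 : ε ^ (-(1/2 : ℝ)) = (ε ^ (-(1/4 : ℝ))) ^ 2 := by
      rw [← Real.rpow_mul_natCast hε.le]; norm_num
    have e3 : ‖q‖ ^ (-(3/2 : ℝ)) = (‖q‖ ^ (-(3/4 : ℝ))) ^ 2 := by
      rw [← Real.rpow_mul_natCast hq'.le]; norm_num
    have e4 : (1 + ‖x‖) ^ (-(4 : ℝ)) = ((1 + ‖x‖) ^ (-(2 : ℝ))) ^ 2 := by
      rw [← Real.rpow_mul_natCast hx.le]; norm_num
    simp only [e1, e2, e3, e4, hA]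
    ring
  have hJ0 : 0 ≤ J := integral_nonneg fun t => by positivity
  have lim : Tendsto (fun ε : ℝ => ε ^ (1/2 : ℝ) * (CΦ * A ^ 2 * J * Q)) (𝓝[>] 0) (𝓝 0) := by
    have h : Tendsto (fun ε : ℝ => ε ^ (1/2 : ℝ)) (𝓝 0) (𝓝 (0 ^ (1/2 : ℝ))) :=
      (Real.continuous_rpow_const (by norm_num)).tendsto 0
    rw [Real.zero_rpow (by norm_num)] at h
    simpa using (h.mono_left nhdsWithin_le_nhds).mul_const (CΦ * A ^ 2 * J * Q)
  have nonneg : ∀ ε : ℝ, ∀ q : EuclideanSpace ℝ (Fin 3), 0 ≤ Φ q *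
            ∫ x : EuclideanSpace ℝ (Fin 3),
              ‖∫ p : EuclideanSpace ℝ (Fin 3),
                  ψ p * Wb (x, p - (θ / (2 * k)) • q) /
                    ((ε : ℂ) + Complex.I * (⟪p, q⟫ : ℂ) / (k : ℂ))‖ ^ 2 :=
    fun ε q => mul_nonneg (hΦ q) (integral_nonneg fun x => by positivity)
  refine tendsto_of_tendsto_of_tendsto_of_le_of_le' tendsto_const_nhds lim ?_ ?_
  · filter_upwards [self_mem_nhdsWithin] with ε hε
    exact mul_nonneg (le_of_lt hε) (integral_nonneg (nonneg ε))
  · filter_upwards [self_mem_nhdsWithin] with ε hε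
    have hε : 0 < ε := hε
    have e : ε ^ (1/2 : ℝ) = ε * ε ^ (-(1/2 : ℝ)) := by
      nth_rw 2 [← Real.rpow_one ε]
      rw [← Real.rpow_add hε]; norm_num
    rw [e, mul_assoc]
    refine mul_le_mul_of_nonneg_left ?_ hε.le
    have e' : ε ^ (-(1/2 : ℝ)) * (CΦ * A ^ 2 * J * Q) =
        (CΦ * A ^ 2 * ε ^ (-(1/2 : ℝ)) * J) * Q := by ring
    rw [e', hQ, ← integral_const_mul]
    refine integral_mono_of_nonneg (.of_forall (nonneg ε)) (q_int.const_mul _) ?_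
    have hne : ∀ᵐ q : EuclideanSpace ℝ (Fin 3), q ≠ 0 := by simp [ae_iff]
    filter_upwards [hne] with q hq
    have h1 : Φ q ≤ CΦ * (1 + ‖q‖) ^ (-(4 : ℝ)) := by
      have := (le_abs_self _).trans (hCΦ q)
      exact_mod_cast this
    refine (mul_le_mul h1 (key ε hε q hq) (integral_nonneg fun x => by positivity)
      (by positivity)).trans (le_of_eq ?_)
    ring
end
end

section
/- Let ν₀ ∈ ℂ, β ∈ ℝ, and let W : ℝ × ℝ² × ℝ² → ℂ, (z,x,p) ↦ W(z,x,p), and F : ℝ × ℝ² × ℝ² → ℂ be smooth functions that are Schwartz in (x,p) uniformly on compact z-intervals. Suppose W satisfies, for all (z,x,p), the paraxial two-frequency transport equation ∂_z W + p·∇ₓW + iν₀ W − F = Δ_p W − 2iβ (x·∇_p W) − β²|x|² W (i.e. ∂_z W + p·∇ₓW + iν₀W − F = (∇_p − iβx)·(∇_p − iβx)W). Define Γ(z,x,y) = ∫_{ℝ²} W(z,x,p) e^{i p·y} dp and F̂(z,x,y) = ∫_{ℝ²} F(z,x,p) e^{i p·y} dp. Then Γ satisfies, for all (z,x,y), the two-frequency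 mutual coherence equation ∂_z Γ − i ∑_{j=1}^{2} ∂²Γ/∂y_j∂x_j + iν₀ Γ − F̂ = −|y + βx|² Γ. -/
open MeasureTheory Complex Filter
open scoped RealInnerProductSpace Topology

noncomputable section

open scoped LineDeriv SchwartzMap

abbrev PE := EuclideanSpace ℝ (Fin 2)

def PUB (S : ℝ → 𝓢(PE × PE, ℂ)) : Prop :=
  ∀ K : Set ℝ, IsCompact K → ∀ kk nn : ℕ,
      ∃ C : ℝ, ∀ z ∈ K, SchwartzMap.seminorm ℝ kk nn (S z) ≤ C

lemma PUB.const (f : 𝓢(PE × PE, ℂ)) : PUB (fun _ => f) :=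
  fun _ _ _ _ => ⟨_, fun _ _ => le_rfl⟩

lemma PUB.clm {S : ℝ → 𝓢(PE × PE, ℂ)} (h : PUB S)
    (T : 𝓢(PE × PE, ℂ) →L[ℝ] 𝓢(PE × PE, ℂ)) : PUB (fun z => T (S z)) := by
  intro K hK kk nn
  have h1 : Bornology.IsVonNBounded ℝ (S '' K) := by
    rw [(schwartz_withSeminorms ℝ (PE × PE) ℂ).isVonNBounded_iff_seminorm_bounded]
    rintro ⟨k, n⟩
    obtain ⟨C, hC⟩ := h K hK k n
    refine ⟨max C 0 + 1, by positivity, ?_⟩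
    rintro _ ⟨z, hz, rfl⟩
    have := hC z hz
    have h2 := le_max_left C 0
    show SchwartzMap.seminorm ℝ k n (S z) < _
    linarith
  have h2 := h1.image T
  rw [(schwartz_withSeminorms ℝ (PE × PE) ℂ).isVonNBounded_iff_seminorm_bounded] at h2
  obtain ⟨C, _, hC⟩ := h2 (kk, nn)
  exact ⟨C, fun z hz => (hC (T (S z)) ⟨S z, ⟨z, hz, rfl⟩, rfl⟩).le⟩

def pw (p : PE) : ℝ := (1 + ‖p‖) ^ (-(3:ℝ))

lemma pw_nonneg (p : PE) : 0 ≤ pw p := by unfold pw; positivity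

lemma pw_int : Integrable pw := integrable_one_add_norm (by simp; norm_num)

lemma PUB.decay {S : ℝ → 𝓢(PE × PE, ℂ)} (h : PUB S) {K : Set ℝ} (hK : IsCompact K) :
    ∃ C : ℝ, 0 ≤ C ∧ ∀ z ∈ K, ∀ x p : PE, (1 + ‖p‖) * ‖S z (x, p)‖ ≤ C * pw p := by
  obtain ⟨C0, h0⟩ := h K hK 0 0
  obtain ⟨C4, h4⟩ := h K hK 4 0
  refine ⟨max (8 * (C0 + C4)) 0, le_max_right _ _, fun z hz x p => ?_⟩
  have a0 := ((S z).le_seminorm ℝ 0 0 (x, p)).trans (h0 z hz)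
  have a4 := ((S z).le_seminorm ℝ 4 0 (x, p)).trans (h4 z hz)
  simp only [norm_iteratedFDeriv_zero, pow_zero, one_mul] at a0 a4
  have hp : ‖p‖ ≤ ‖(x, p)‖ := le_max_right _ _
  have hpos : 0 < 1 + ‖p‖ := by positivity
  have hw : pw p = ((1 + ‖p‖) ^ 3)⁻¹ := by
    unfold pw
    rw [Real.rpow_neg hpos.le]; norm_cast
  rw [hw, ← div_eq_mul_inv, le_div_iff₀ (by positivity)]
  refine le_trans ?_ (le_max_left _ _)
  have hr : (1 + ‖p‖) ^ 4 ≤ 8 * (1 + ‖(x, p)‖ ^ 4) := by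
    have h1 : (1 + ‖p‖) ^ 4 ≤ (1 + ‖(x, p)‖) ^ 4 := by gcongr
    generalize ‖(x, p)‖ = r at *
    nlinarith [sq_nonneg (r - 1), sq_nonneg (r ^ 2 - 1), sq_nonneg (r*(r - 1)), sq_nonneg (r^2-2*r+1)]
  calc (1 + ‖p‖) * ‖S z (x, p)‖ * (1 + ‖p‖) ^ 3 = (1 + ‖p‖) ^ 4 * ‖S z (x, p)‖ := by ring
    _ ≤ 8 * (1 + ‖(x, p)‖ ^ 4) * ‖S z (x, p)‖ := by gcongr
    _ ≤ _ := by linarith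

lemma pdecay (f : 𝓢(PE × PE, ℂ)) :
    ∃ C : ℝ, 0 ≤ C ∧ ∀ x p : PE, (1 + ‖p‖) * ‖f (x, p)‖ ≤ C * pw p := by
  obtain ⟨C, h0, h⟩ := (PUB.const f).decay (isCompact_singleton (x := (0:ℝ)))
  exact ⟨C, h0, h 0 rfl⟩

def pe (p y : PE) : ℂ := Complex.exp (Complex.I * (⟪p, y⟫ : ℂ))

lemma pe_norm (p y : PE) : ‖pe p y‖ = 1 := by
  unfold pe; rw [mul_comm]; exact Complex.norm_exp_ofReal_mul_I _

lemma pe_cont (y : PE) : Continuous (fun p => pe p y) := by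
  unfold pe; fun_prop

lemma pe_deriv_left (p y : PE) :
    HasFDerivAt (fun p => pe p y) ((Complex.I * pe p y) • (Complex.ofRealCLM.comp (innerSL ℝ y))) p := by
  have h1 : HasFDerivAt (fun p : PE => ((⟪p, y⟫ : ℝ) : ℂ)) (Complex.ofRealCLM.comp (innerSL ℝ y)) p := by
    have := (Complex.ofRealCLM.comp (innerSL ℝ y)).hasFDerivAt (x := p)
    convert this using 2 with q
    simp [real_inner_comm]
  have h2 : HasFDerivAt (fun p => pe p y) _ p := (h1.const_mul Complex.I).cexp
  refine h2.congr_fderiv ?_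
  rw [smul_smul, mul_comm]; rfl

lemma pe_comm (p y : PE) : pe p y = pe y p := by simp [pe, real_inner_comm]

lemma pe_deriv_right (p y : PE) :
    HasFDerivAt (fun y => pe p y) ((Complex.I * pe p y) • (Complex.ofRealCLM.comp (innerSL ℝ p))) y := by
  have := pe_deriv_left y p
  simpa only [pe_comm] using this

lemma pint_of_bound {g : PE → ℂ} (hg : Continuous g) {C : ℝ} (h : ∀ p, ‖g p‖ ≤ C * pw p) :
    Integrable g :=
  (pw_int.const_mul C).mono' hg.aestronglyMeasurable (Eventually.of_forall h)

lemma pslice_cont (f : 𝓢(PE × PE, ℂ)) (x : PE) : Continuous (fun p => f (x, p)) :=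
  f.continuous.comp (by fun_prop)

lemma le_of_decay {C a b w : ℝ} (ha : 0 ≤ a) (hb : 0 ≤ b) (h : (1 + a) * b ≤ C * w) :
    b ≤ C * w ∧ a * b ≤ C * w := by
  constructor <;> nlinarith [mul_nonneg ha hb]

lemma pint (f : 𝓢(PE × PE, ℂ)) (x y : PE) : Integrable (fun p => f (x, p) * pe p y) := by
  obtain ⟨C, _, h⟩ := pdecay f
  refine pint_of_bound ((pslice_cont f x).mul (pe_cont y)) (C := C) fun p => ?_
  rw [norm_mul, pe_norm, mul_one]
  exact (le_of_decay (norm_nonneg _) (norm_nonneg _) (h x p)).1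

lemma pint_coord (f : 𝓢(PE × PE, ℂ)) (x y v : PE) :
    Integrable (fun p => ((⟪p, v⟫ : ℝ) : ℂ) * f (x, p) * pe p y) := by
  obtain ⟨C, _, h⟩ := pdecay f
  refine pint_of_bound (C := ‖v‖ * C)
    (((by fun_prop : Continuous fun p : PE => ((⟪p, v⟫ : ℝ) : ℂ)).mul (pslice_cont f x)).mul (pe_cont y))
    fun p => ?_
  rw [norm_mul, norm_mul, pe_norm, mul_one, Complex.norm_real]
  have h1 := (le_of_decay (norm_nonneg _) (norm_nonneg _) (h x p)).2
  calc _ ≤ (‖p‖ * ‖v‖) * ‖f (x, p)‖ := by gcongr; exact norm_inner_le_norm _ _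
    _ = ‖v‖ * (‖p‖ * ‖f (x, p)‖) := by ring
    _ ≤ ‖v‖ * (C * pw p) := by gcongr
    _ = _ := by ring

lemma pfderiv_left (f : 𝓢(PE × PE, ℂ)) (x p : PE) :
    HasFDerivAt (fun x' => f (x', p)) ((fderiv ℝ f (x, p)).comp (ContinuousLinearMap.inl ℝ PE PE)) x :=
  HasFDerivAt.comp x f.differentiableAt.hasFDerivAt (hasFDerivAt_prodMk_left x p)

lemma pfderiv_right (f : 𝓢(PE × PE, ℂ)) (x p : PE) :
    HasFDerivAt (fun p' => f (x, p')) ((fderiv ℝ f (x, p)).comp (ContinuousLinearMap.inr ℝ PE PE)) p :=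
  HasFDerivAt.comp p f.differentiableAt.hasFDerivAt (hasFDerivAt_prodMk_right x p)

lemma pfderiv_left_apply (f : 𝓢(PE × PE, ℂ)) (x p v : PE) :
    fderiv ℝ (fun x' => f (x', p)) x v = (∂_{((v, 0) : PE × PE)} f) (x, p) := by
  rw [(pfderiv_left f x p).fderiv, SchwartzMap.lineDerivOp_apply_eq_fderiv]; rfl

lemma pfderiv_right_apply (f : 𝓢(PE × PE, ℂ)) (x p v : PE) :
    fderiv ℝ (fun p' => f (x, p')) p v = (∂_{((0, v) : PE × PE)} f) (x, p) := by
  rw [(pfderiv_right f x p).fderiv, SchwartzMap.lineDerivOp_apply_eq_fderiv]; rfl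

/-- decay of the full derivative -/
lemma pdecay_fderiv (f : 𝓢(PE × PE, ℂ)) :
    ∃ C : ℝ, ∀ x p : PE, ‖fderiv ℝ f (x, p)‖ ≤ C * pw p := by
  have h0 := fun q => f.le_seminorm ℝ 0 1 q
  have h3 := fun q => f.le_seminorm ℝ 3 1 q
  refine ⟨4 * (SchwartzMap.seminorm ℝ 0 1 f + SchwartzMap.seminorm ℝ 3 1 f), fun x p => ?_⟩
  have a0 := h0 (x, p)
  have a4 := h3 (x, p)
  simp only [norm_iteratedFDeriv_one, pow_zero, one_mul] at a0 a4
  have hp : ‖p‖ ≤ ‖(x, p)‖ := le_max_right _ _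
  have hpos : 0 < 1 + ‖p‖ := by positivity
  have hw : pw p = ((1 + ‖p‖) ^ 3)⁻¹ := by
    unfold pw
    rw [Real.rpow_neg hpos.le]; norm_cast
  rw [hw, ← div_eq_mul_inv, le_div_iff₀ (by positivity)]
  have hr : (1 + ‖p‖) ^ 3 ≤ 4 * (1 + ‖(x, p)‖ ^ 3) := by
    have h1 : (1 + ‖p‖) ^ 3 ≤ (1 + ‖(x, p)‖) ^ 3 := by gcongr
    have h2 : 0 ≤ ‖(x, p)‖ := norm_nonneg _
    generalize ‖(x, p)‖ = r at *
    nlinarith [sq_nonneg (r - 1), mul_nonneg h2 (sq_nonneg (r-1))]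
  calc _ ≤ ‖fderiv ℝ f (x, p)‖ * (4 * (1 + ‖(x, p)‖ ^ 3)) := by gcongr
    _ ≤ _ := by linarith

lemma pΓ_x (f : 𝓢(PE × PE, ℂ)) (x y v : PE) :
    fderiv ℝ (fun x' => ∫ p, f (x', p) * pe p y) x v
      = ∫ p, (∂_{((v, 0) : PE × PE)} f) (x, p) * pe p y := by
  obtain ⟨C, hC⟩ := pdecay_fderiv f
  have hcont : Continuous fun p : PE => pe p y •
      (fderiv ℝ f (x, p)).comp (ContinuousLinearMap.inl ℝ PE PE) := by
    have h1 : Continuous (fderiv ℝ f) := (f.smooth 1).continuous_fderiv (by simp)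
    have h2 : Continuous fun p : PE => fderiv ℝ f (x, p) := h1.comp (by fun_prop)
    exact (pe_cont y).smul (h2.clm_comp continuous_const)
  have hb : ∀ p x', ‖pe p y • (fderiv ℝ f (x', p)).comp (ContinuousLinearMap.inl ℝ PE PE)‖
      ≤ C * pw p := by
    intro p x'
    rw [norm_smul, pe_norm, one_mul]
    refine le_trans (ContinuousLinearMap.opNorm_comp_le _ _) (le_trans ?_ (hC x' p))
    exact mul_le_of_le_one_right (norm_nonneg _) (ContinuousLinearMap.norm_inl_le_one ℝ PE PE)
  have key := hasFDerivAt_integral_of_dominated_of_fderiv_le (μ := volume) (𝕜 := ℝ)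
    (F := fun x' p => f (x', p) * pe p y) (x₀ := x) (s := Set.univ)
    (F' := fun x' p => pe p y • (fderiv ℝ f (x', p)).comp (ContinuousLinearMap.inl ℝ PE PE))
    (bound := fun p => C * pw p) univ_mem
    (Eventually.of_forall fun x' => (pint f x' y).1) (pint f x y) hcont.aestronglyMeasurable
    (Eventually.of_forall fun p x' _ => hb p x') (pw_int.const_mul C)
    (Eventually.of_forall fun p x' _ => (pfderiv_left f x' p).mul_const (pe p y))
  rw [key.fderiv, ContinuousLinearMap.integral_apply]
  · congr 1; ext p
    rw [SchwartzMap.lineDerivOp_apply_eq_fderiv]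
    simp [mul_comm]
  · exact (pw_int.const_mul C).mono' hcont.aestronglyMeasurable
      (Eventually.of_forall fun p => hb p x)

lemma pΓ_y (f : 𝓢(PE × PE, ℂ)) (x y v : PE) :
    fderiv ℝ (fun y' => ∫ p, f (x, p) * pe p y') y v
      = Complex.I * ∫ p, ((⟪p, v⟫ : ℝ) : ℂ) * f (x, p) * pe p y := by
  obtain ⟨C, _, hC⟩ := pdecay f
  have hcont : Continuous fun p : PE => f (x, p) •
      ((Complex.I * pe p y) • (Complex.ofRealCLM.comp (innerSL ℝ p))) := by
    refine (pslice_cont f x).smul ((continuous_const.mul (pe_cont y)).smul ?_)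
    exact continuous_const.clm_comp (innerSL ℝ).continuous
  have hb : ∀ p y', ‖f (x, p) • ((Complex.I * pe p y') • (Complex.ofRealCLM.comp (innerSL ℝ p)))‖
      ≤ C * pw p := by
    intro p y'
    rw [norm_smul, norm_smul, norm_mul, pe_norm, Complex.norm_I, one_mul, one_mul]
    refine le_trans ?_ (le_of_decay (norm_nonneg _) (norm_nonneg _) (hC x p)).2
    rw [mul_comm]
    gcongr
    refine le_trans (ContinuousLinearMap.opNorm_comp_le _ _) ?_
    simp
  have key := hasFDerivAt_integral_of_dominated_of_fderiv_le (μ := volume) (𝕜 := ℝ)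
    (F := fun y' p => f (x, p) * pe p y') (x₀ := y) (s := Set.univ)
    (F' := fun y' p => f (x, p) • ((Complex.I * pe p y') • (Complex.ofRealCLM.comp (innerSL ℝ p))))
    (bound := fun p => C * pw p) univ_mem
    (Eventually.of_forall fun y' => (pint f x y').1) (pint f x y) hcont.aestronglyMeasurable
    (Eventually.of_forall fun p y' _ => hb p y') (pw_int.const_mul C)
    (Eventually.of_forall fun p y' _ => (pe_deriv_right p y').const_mul (f (x, p)))
  rw [key.fderiv, ContinuousLinearMap.integral_apply, ← integral_const_mul]
  · congr 1; ext p
    simp; ring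
  · exact (pw_int.const_mul C).mono' hcont.aestronglyMeasurable
      (Eventually.of_forall fun p => hb p y)

lemma pibp (f : 𝓢(PE × PE, ℂ)) (x y v : PE) :
    ∫ p, (∂_{((0, v) : PE × PE)} f) (x, p) * pe p y
      = - (Complex.I * ((⟪y, v⟫ : ℝ) : ℂ)) * ∫ p, f (x, p) * pe p y := by
  have hd : ∀ p, fderiv ℝ (fun p => pe p y) p v = (Complex.I * ((⟪y, v⟫ : ℝ) : ℂ)) * pe p y := by
    intro p
    rw [(pe_deriv_left p y).fderiv]; simp; ring
  have h := integral_mul_fderiv_eq_neg_fderiv_mul_of_integrable (μ := (volume : Measure PE))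
    (f := fun p => f (x, p)) (g := fun p => pe p y) (v := v) (by
      simp only [pfderiv_right_apply]; exact pint _ x y) (by
      simp only [hd]
      refine ((pint f x y).const_mul (Complex.I * ((⟪y, v⟫ : ℝ) : ℂ))).congr
        (Eventually.of_forall fun p => ?_)
      simp only; ring) (pint f x y)
      (fun p _ => (pfderiv_right f x p).differentiableAt)
      (fun p _ => (pe_deriv_left p y).differentiableAt)
  simp only [pfderiv_right_apply, hd] at h
  rw [eq_comm, neg_eq_iff_eq_neg] at h
  rw [h, neg_mul, ← integral_const_mul]
  congr 2; ext p; ring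

def pJ (x y : PE) (f : 𝓢(PE × PE, ℂ)) : ℂ := ∫ p, f (x, p) * pe p y

lemma pJ_add (x y : PE) (f g : 𝓢(PE × PE, ℂ)) : pJ x y (f + g) = pJ x y f + pJ x y g := by
  unfold pJ
  rw [← integral_add (pint f x y) (pint g x y)]
  congr 1; ext p; simp [add_mul]

lemma pJ_smul (x y : PE) (c : ℂ) (f : 𝓢(PE × PE, ℂ)) : pJ x y (c • f) = c * pJ x y f := by
  unfold pJ
  rw [← integral_const_mul]
  congr 1; ext p; simp [mul_assoc]

lemma pJ_dp (x y v : PE) (f : 𝓢(PE × PE, ℂ)) :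
    pJ x y (∂_{((0, v) : PE × PE)} f) = - (Complex.I * ((⟪y, v⟫ : ℝ) : ℂ)) * pJ x y f :=
  pibp f x y v

abbrev pd (v : PE × PE) : 𝓢(PE × PE, ℂ) →L[ℂ] 𝓢(PE × PE, ℂ) :=
  LineDeriv.lineDerivOpCLM ℂ 𝓢(PE × PE, ℂ) v

abbrev pb (j : Fin 2) : PE := EuclideanSpace.single j 1

def pT (ν₀ : ℂ) (β : ℝ) (x : PE) : 𝓢(PE × PE, ℂ) →L[ℂ] 𝓢(PE × PE, ℂ) :=
  (pd (0, pb 0)).comp (pd (0, pb 0)) + (pd (0, pb 1)).comp (pd (0, pb 1))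
    + (-(2 * Complex.I * (β : ℂ))) • pd (0, x)
    + (-((β ^ 2 * ‖x‖ ^ 2 : ℝ) : ℂ) - Complex.I * ν₀) • ContinuousLinearMap.id ℂ _

lemma pT_apply (ν₀ : ℂ) (β : ℝ) (x : PE) (f : 𝓢(PE × PE, ℂ)) :
    pT ν₀ β x f = ∂_{((0, pb 0) : PE × PE)} (∂_{((0, pb 0) : PE × PE)} f)
      + ∂_{((0, pb 1) : PE × PE)} (∂_{((0, pb 1) : PE × PE)} f)
      + (-(2 * Complex.I * (β : ℂ))) • (∂_{((0, x) : PE × PE)} f)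
      + (-((β ^ 2 * ‖x‖ ^ 2 : ℝ) : ℂ) - Complex.I * ν₀) • f := rfl

lemma p_dx_split (f : 𝓢(PE × PE, ℂ)) (x p : PE) :
    (∂_{((p, 0) : PE × PE)} f) (x, p) =
      ((⟪p, pb 0⟫ : ℝ) : ℂ) * (∂_{((pb 0, 0) : PE × PE)} f) (x, p)
      + ((⟪p, pb 1⟫ : ℝ) : ℂ) * (∂_{((pb 1, 0) : PE × PE)} f) (x, p) := by
  have hp : ((p, 0) : PE × PE) = (⟪p, pb 0⟫ : ℝ) • ((pb 0, 0) : PE × PE)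
      + (⟪p, pb 1⟫ : ℝ) • ((pb 1, 0) : PE × PE) := by
    ext i
    · fin_cases i <;> simp [pb, EuclideanSpace.inner_single_right]
    · simp
  simp only [SchwartzMap.lineDerivOp_apply_eq_fderiv]
  conv_lhs => rw [hp]
  rw [map_add, map_smul, map_smul, Complex.real_smul, Complex.real_smul]

lemma p_norm_sq (β : ℝ) (x y : PE) : ‖y + β • x‖ ^ 2
    = ⟪y, pb 0⟫ ^ 2 + ⟪y, pb 1⟫ ^ 2 + 2 * β * ⟪y, x⟫ + β ^ 2 * ‖x‖ ^ 2 := by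
  rw [norm_add_sq_real, norm_smul, inner_smul_right, mul_pow, Real.norm_eq_abs, sq_abs,
    EuclideanSpace.norm_sq_eq y]
  simp [pb, EuclideanSpace.inner_single_right]
  ring

/-- Fourier inversion in the momentum variable converts the paraxial
two-frequency transport equation
`∂_z W + p·∇ₓW + iν₀W − F = (∇_p − iβx)·(∇_p − iβx)W`
into the two-frequency mutual coherence equation
`∂_z Γ − i ∑_j ∂²Γ/∂y_j∂x_j + iν₀Γ − F̂ = −|y + βx|² Γ`,
where `Γ(z,x,y) = ∫ W(z,x,p) e^{i p·y} dp` and likewise for `F̂`. The functions `W, F` are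
smooth and Schwartz in `(x,p)` uniformly on compact `z`-intervals. -/
theorem paraxial_transport_to_mutual_coherence
    (ν₀ : ℂ) (β : ℝ)
    (W F : ℝ → EuclideanSpace ℝ (Fin 2) → EuclideanSpace ℝ (Fin 2) → ℂ)
    (hWsmooth : ContDiff ℝ (⊤ : ℕ∞)
      (fun q : ℝ × EuclideanSpace ℝ (Fin 2) × EuclideanSpace ℝ (Fin 2) => W q.1 q.2.1 q.2.2))
    (hFsmooth : ContDiff ℝ (⊤ : ℕ∞)
      (fun q : ℝ × EuclideanSpace ℝ (Fin 2) × EuclideanSpace ℝ (Fin 2) => F q.1 q.2.1 q.2.2))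
    (WS FS : ℝ → SchwartzMap (EuclideanSpace ℝ (Fin 2) × EuclideanSpace ℝ (Fin 2)) ℂ)
    (hWS : ∀ z x p, W z x p = WS z (x, p))
    (hFS : ∀ z x p, F z x p = FS z (x, p))
    (hWunif : ∀ K : Set ℝ, IsCompact K → ∀ kk nn : ℕ,
      ∃ C : ℝ, ∀ z ∈ K, SchwartzMap.seminorm ℝ kk nn (WS z) ≤ C)
    (hFunif : ∀ K : Set ℝ, IsCompact K → ∀ kk nn : ℕ,
      ∃ C : ℝ, ∀ z ∈ K, SchwartzMap.seminorm ℝ kk nn (FS z) ≤ C)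
    (heq : ∀ (z : ℝ) (x p : EuclideanSpace ℝ (Fin 2)),
      deriv (fun z' => W z' x p) z
          + fderiv ℝ (fun x' => W z x' p) x p
          + Complex.I * ν₀ * W z x p - F z x p
        = (∑ j : Fin 2,
              fderiv ℝ (fun p' => fderiv ℝ (fun p'' => W z x p'') p' (EuclideanSpace.single j 1))
                p (EuclideanSpace.single j 1))
          - 2 * Complex.I * (β : ℂ) * fderiv ℝ (fun p' => W z x p') p x
          - ((β ^ 2 * ‖x‖ ^ 2 : ℝ) : ℂ) * W z x p)
    (Γ Fh : ℝ → EuclideanSpace ℝ (Fin 2) → EuclideanSpace ℝ (Fin 2) → ℂ)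
    (hΓ : ∀ z x y, Γ z x y =
      ∫ p : EuclideanSpace ℝ (Fin 2), W z x p * Complex.exp (Complex.I * (⟪p, y⟫ : ℂ)))
    (hFh : ∀ z x y, Fh z x y =
      ∫ p : EuclideanSpace ℝ (Fin 2), F z x p * Complex.exp (Complex.I * (⟪p, y⟫ : ℂ))) :
    ∀ (z : ℝ) (x y : EuclideanSpace ℝ (Fin 2)),
      deriv (fun z' => Γ z' x y) z
          - Complex.I *
            (∑ j : Fin 2,
              fderiv ℝ (fun y' => fderiv ℝ (fun x' => Γ z x' y') x (EuclideanSpace.single j 1))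
                y (EuclideanSpace.single j 1))
          + Complex.I * ν₀ * Γ z x y - Fh z x y
        = -((‖y + β • x‖ ^ 2 : ℝ) : ℂ) * Γ z x y := by
  intro z x y
  obtain rfl : W = fun z x p => WS z (x, p) := by ext z x p; exact hWS z x p
  obtain rfl : F = fun z x p => FS z (x, p) := by ext z x p; exact hFS z x p
  obtain rfl : Γ = fun z x y => pJ x y (WS z) := by ext z x y; exact hΓ z x y
  obtain rfl : Fh = fun z x y => pJ x y (FS z) := by ext z x y; exact hFh z x y
  have hdz : ∀ z p, deriv (fun z' => WS z' (x, p)) z = pT ν₀ β x (WS z) (x, p) + FS z (x, p)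
      - (((⟪p, pb 0⟫ : ℝ) : ℂ) * (∂_{((pb 0, 0) : PE × PE)} (WS z)) (x, p)
      + ((⟪p, pb 1⟫ : ℝ) : ℂ) * (∂_{((pb 1, 0) : PE × PE)} (WS z)) (x, p)) := by
    intro z p
    have h := heq z x p
    simp only [pfderiv_right_apply, pfderiv_left_apply, Fin.sum_univ_two] at h
    rw [← p_dx_split, pT_apply]
    simp only [_root_.add_apply, _root_.smul_apply, smul_eq_mul]
    linear_combination h
  have hW : PUB WS := hWunif
  have hF : PUB FS := hFunif
  have hK : IsCompact (Metric.closedBall z 1) := isCompact_closedBall z 1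
  obtain ⟨C1, _, h1⟩ := (hW.clm ((pT ν₀ β x).restrictScalars ℝ)).decay hK
  obtain ⟨C2, _, h2⟩ := hF.decay hK
  obtain ⟨C3, _, h3⟩ := (hW.clm ((pd (pb 0, 0)).restrictScalars ℝ)).decay hK
  obtain ⟨C4, _, h4⟩ := (hW.clm ((pd (pb 1, 0)).restrictScalars ℝ)).decay hK
  have hbd : ∀ p, ∀ z' ∈ Metric.closedBall z 1,
      ‖deriv (fun z' => WS z' (x, p)) z' * pe p y‖ ≤ (C1 + C2 + (C3 + C4)) * pw p := by
    intro p z' hz'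
    rw [norm_mul, pe_norm, mul_one, hdz]
    have e1 := (le_of_decay (norm_nonneg _) (norm_nonneg _) (h1 z' hz' x p)).1
    have e2 := (le_of_decay (norm_nonneg _) (norm_nonneg _) (h2 z' hz' x p)).1
    have e3 := (le_of_decay (norm_nonneg _) (norm_nonneg _) (h3 z' hz' x p)).2
    have e4 := (le_of_decay (norm_nonneg _) (norm_nonneg _) (h4 z' hz' x p)).2
    have hn : ∀ j : Fin 2, ∀ c : ℂ, ‖((⟪p, pb j⟫ : ℝ) : ℂ) * c‖ ≤ ‖p‖ * ‖c‖ := by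
      intro j c
      rw [norm_mul, Complex.norm_real]
      gcongr
      refine (norm_inner_le_norm _ _).trans ?_
      simp [pb]
    refine (norm_sub_le _ _).trans ?_
    rw [add_mul, add_mul, add_mul]
    refine add_le_add ((norm_add_le _ _).trans (add_le_add e1 e2))
      ((norm_add_le _ _).trans (add_le_add ((hn 0 _).trans e3) ((hn 1 _).trans e4)))
  have i0 := pint_coord (∂_{((pb 0, 0) : PE × PE)} (WS z)) x y (pb 0)
  have i1 := pint_coord (∂_{((pb 1, 0) : PE × PE)} (WS z)) x y (pb 1)
  have iT := pint (pT ν₀ β x (WS z)) x y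
  have iF := pint (FS z) x y
  have hsplit : (fun p => deriv (fun z' => WS z' (x, p)) z * pe p y) = fun p =>
      (pT ν₀ β x (WS z) (x, p) * pe p y + FS z (x, p) * pe p y)
      - (((⟪p, pb 0⟫ : ℝ) : ℂ) * (∂_{((pb 0, 0) : PE × PE)} (WS z)) (x, p) * pe p y
      + ((⟪p, pb 1⟫ : ℝ) : ℂ) * (∂_{((pb 1, 0) : PE × PE)} (WS z)) (x, p) * pe p y) := by
    ext p; rw [hdz]; ring
  have hmeas : AEStronglyMeasurable (fun p => deriv (fun z' => WS z' (x, p)) z * pe p y) := by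
    rw [hsplit]
    exact ((iT.add iF).sub (i0.add i1)).1
  have hdiff : ∀ p z', DifferentiableAt ℝ (fun z' => WS z' (x, p)) z' := by
    intro p z'
    have hc : ContDiff ℝ (⊤ : ℕ∞) (fun z' : ℝ => WS z' (x, p)) :=
      hWsmooth.comp (contDiff_id.prodMk contDiff_const : ContDiff ℝ (⊤ : ℕ∞)
        fun z' : ℝ => (z', ((x, p) : PE × PE)))
    exact hc.differentiable (by simp) z'
  have key := (hasDerivAt_integral_of_dominated_loc_of_deriv_le (μ := (volume : Measure PE)) (𝕜 := ℝ)
    (F := fun z' p => WS z' (x, p) * pe p y) (x₀ := z) (s := Metric.closedBall z 1)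
    (F' := fun z' p => deriv (fun z' => WS z' (x, p)) z' * pe p y)
    (bound := fun p => (C1 + C2 + (C3 + C4)) * pw p) (Metric.closedBall_mem_nhds z one_pos)
    (Eventually.of_forall fun z' => (pint (WS z') x y).1) (pint (WS z) x y) hmeas
    (Eventually.of_forall hbd) (pw_int.const_mul _)
    (Eventually.of_forall fun p z' _ => (hdiff p z').hasDerivAt.mul_const (pe p y))).2
  have hz : deriv (fun z' => pJ x y (WS z')) z = pJ x y (pT ν₀ β x (WS z)) + pJ x y (FS z)
      - ((∫ p, ((⟪p, pb 0⟫ : ℝ) : ℂ) * (∂_{((pb 0, 0) : PE × PE)} (WS z)) (x, p) * pe p y)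
      + ∫ p, ((⟪p, pb 1⟫ : ℝ) : ℂ) * (∂_{((pb 1, 0) : PE × PE)} (WS z)) (x, p) * pe p y) := by
    refine key.deriv.trans ?_
    rw [hsplit]
    refine (integral_sub (iT.add iF) (i0.add i1)).trans ?_
    exact congrArg₂ (· - ·) (integral_add iT iF) (integral_add i0 i1)
  have hxy : ∀ j : Fin 2, fderiv ℝ (fun y' => fderiv ℝ (fun x' => pJ x' y' (WS z)) x
      (EuclideanSpace.single j 1)) y (EuclideanSpace.single j 1) = Complex.I *
      ∫ p, ((⟪p, pb j⟫ : ℝ) : ℂ) * (∂_{((pb j, 0) : PE × PE)} (WS z)) (x, p) * pe p y := by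
    intro j
    unfold pJ
    simp only [pΓ_x]
    exact pΓ_y _ x y (pb j)
  simp only [hxy, Fin.sum_univ_two]
  rw [hz, pT_apply, p_norm_sq]
  simp only [pJ_add, pJ_smul, pJ_dp]
  push_cast
  ring_nf
  simp only [Complex.I_sq]
  ring
end
end

section
/- Let β > 0, ν₀ ∈ ℂ, and fix x', y' ∈ ℝ². Set γ = (1+i)√(2β) ∈ ℂ, so that γ² = 4iβ. Then sinh(γz) ≠ 0 and cosh(γz) ≠ 0 for every real z > 0, and the function G(z,x,y) = e^{−iν₀z} · (γ / ((2π)² z sinh(γz))) · exp( |y − βx − (y' − βx')|² / (γ² z) ) · exp( −(coth(γz)/γ) · | y + βx − (y' + βx')/cosh(γz) |² ) · exp( −(tanh(γz)/γ) · |y' + βx'|² ), defined for z > 0 and x, y ∈ ℝ², is smooth and satisfies for all z > 0, x, y ∈ ℝ² the homogeneous two-frequency mutual coherence equation ∂_z G − i ∑_{j=1}^{2} ∂²G/∂y_j∂x_j + iν₀ G + |y + βx|² G = 0. -/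
open MeasureTheory Complex Filter
open scoped RealInnerProductSpace Topology

noncomputable section

lemma fderiv_apply_eq {E : Type*} [NormedAddCommGroup E] [NormedSpace ℝ E] (f : E → ℂ) (x v : E)
    (d : ℂ) (hf : DifferentiableAt ℝ f x) (h : HasDerivAt (fun t : ℝ => f (x + t • v)) d 0) :
    fderiv ℝ f x v = d := by
  rw [← hf.lineDeriv_eq_fderiv]
  exact h.deriv

lemma hd_congr {f g : ℝ → ℂ} {f' g' : ℂ} {x : ℝ} (h : HasDerivAt f f' x) (h1 : ∀ t, g t = f t)
    (h2 : g' = f') : HasDerivAt g g' x := by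
  rw [h2, funext h1]
  exact h

lemma cdiv {E : Type*} [NormedAddCommGroup E] [NormedSpace ℝ E] {f g : E → ℂ} {x : E}
    (hf : ContDiffAt ℝ (⊤ : ℕ∞) f x) (hg : ContDiffAt ℝ (⊤ : ℕ∞) g x) (h : g x ≠ 0) :
    ContDiffAt ℝ (⊤ : ℕ∞) (fun q => f q / g q) x := by
  simp only [div_eq_mul_inv]
  exact hf.mul (hg.inv h)

def gq (A B : ℂ) (β : ℝ) (m P : Fin 2 → ℂ) (x y : EuclideanSpace ℝ (Fin 2)) : ℂ :=
  A * (∑ j : Fin 2, ((y j : ℂ) - β * (x j : ℂ) - m j) ^ 2)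
    + B * (∑ j : Fin 2, ((y j : ℂ) + β * (x j : ℂ) - P j) ^ 2)

lemma coord_diff (j : Fin 2) : Differentiable ℝ (fun x : EuclideanSpace ℝ (Fin 2) => ((x j : ℝ) : ℂ)) := by
  have h : Differentiable ℝ (fun x : EuclideanSpace ℝ (Fin 2) => x j) := by fun_prop
  exact Complex.ofRealCLM.differentiable.comp h

lemma gq_diff_x (A B : ℂ) (β : ℝ) (m P : Fin 2 → ℂ) (y : EuclideanSpace ℝ (Fin 2)) :
    Differentiable ℝ (fun x => gq A B β m P x y) := by
  have := coord_diff
  unfold gq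
  fun_prop

lemma gq_diff_y (A B : ℂ) (β : ℝ) (m P : Fin 2 → ℂ) (x : EuclideanSpace ℝ (Fin 2)) :
    Differentiable ℝ (fun y => gq A B β m P x y) := by
  have := coord_diff
  unfold gq
  fun_prop

lemma quad_deriv (a b c : ℂ) : HasDerivAt (fun t : ℝ => a + b * (t : ℂ) + c * (t : ℂ) ^ 2) b 0 := by
  have h : HasDerivAt (fun t : ℝ => (t : ℂ)) 1 0 := Complex.ofRealCLM.hasDerivAt
  have := ((h.const_mul b).const_add a).add ((h.pow 2).const_mul c)
  refine hd_congr this (fun t => by simp) (by simp)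

lemma gq_line_x (A B : ℂ) (β : ℝ) (m P : Fin 2 → ℂ) (x y : EuclideanSpace ℝ (Fin 2)) (j : Fin 2) :
    HasDerivAt (fun t : ℝ => gq A B β m P (x + t • EuclideanSpace.single j 1) y)
      (β * (-2 * A * ((y j : ℂ) - β * (x j : ℂ) - m j)
        + 2 * B * ((y j : ℂ) + β * (x j : ℂ) - P j))) 0 := by
  convert quad_deriv (gq A B β m P x y) _ ((A + B) * β ^ 2) using 1
  funext t
  fin_cases j <;> simp [gq, Fin.sum_univ_two] <;> ring

lemma gq_line_y (A B : ℂ) (β : ℝ) (m P : Fin 2 → ℂ) (x y : EuclideanSpace ℝ (Fin 2)) (j : Fin 2) :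
    HasDerivAt (fun t : ℝ => gq A B β m P x (y + t • EuclideanSpace.single j 1))
      (2 * A * ((y j : ℂ) - β * (x j : ℂ) - m j)
        + 2 * B * ((y j : ℂ) + β * (x j : ℂ) - P j)) 0 := by
  convert quad_deriv (gq A B β m P x y) _ (A + B) using 1
  funext t
  fin_cases j <;> simp [gq, Fin.sum_univ_two] <;> ring

lemma mixed (K A B : ℂ) (β : ℝ) (m P : Fin 2 → ℂ) (x y : EuclideanSpace ℝ (Fin 2)) (j : Fin 2) :
    fderiv ℝ (fun y'' => fderiv ℝ (fun x'' => K * Complex.exp (gq A B β m P x'' y'')) x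
      (EuclideanSpace.single j 1)) y (EuclideanSpace.single j 1)
    = K * Complex.exp (gq A B β m P x y) *
      (β * (4 * B ^ 2 * ((y j : ℂ) + β * (x j : ℂ) - P j) ^ 2
        - 4 * A ^ 2 * ((y j : ℂ) - β * (x j : ℂ) - m j) ^ 2) + β * (2 * B - 2 * A)) := by
  have h1 : ∀ y'' : EuclideanSpace ℝ (Fin 2),
      fderiv ℝ (fun x'' => K * Complex.exp (gq A B β m P x'' y'')) x
      (EuclideanSpace.single j 1) = K * (Complex.exp (gq A B β m P x y'') *
        (β * (-2 * A * ((y'' j : ℂ) - β * (x j : ℂ) - m j)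
        + 2 * B * ((y'' j : ℂ) + β * (x j : ℂ) - P j)))) := by
    intro y''
    apply fderiv_apply_eq
    · have := gq_diff_x A B β m P y''
      exact ((this x).cexp).const_mul K
    · have := ((gq_line_x A B β m P x y'' j).cexp).const_mul K
      simpa using this
  simp_rw [h1]
  apply fderiv_apply_eq
  · have h2 := gq_diff_y A B β m P x
    have h3 := coord_diff
    fun_prop
  · have h2 := (gq_line_y A B β m P x y j).cexp
    have h3 := quad_deriv (β * (-2 * A * ((y j : ℂ) - β * (x j : ℂ) - m j)
        + 2 * B * ((y j : ℂ) + β * (x j : ℂ) - P j))) (β * (-2 * A + 2 * B)) 0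
    have h4 := (h2.mul h3).const_mul K
    refine hd_congr h4 (fun t => ?_) ?_
    · simp
      left
      ring
    · simp
      ring

lemma sc_ne (w : ℂ) (hw : 0 < w.re) : Complex.sinh w ≠ 0 ∧ Complex.cosh w ≠ 0 := by
  have hn : ‖Complex.exp w‖ ≠ ‖Complex.exp (-w)‖ := by
    rw [Complex.norm_exp, Complex.norm_exp]
    intro h
    have := Real.exp_injective h
    simp at this
    linarith
  constructor
  · intro h
    apply hn
    have : Complex.exp w - Complex.exp (-w) = 0 := by
      rw [← Complex.two_sinh, h, mul_zero]
    rw [sub_eq_zero.mp this]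
  · intro h
    apply hn
    have : Complex.exp w + Complex.exp (-w) = 0 := by
      rw [← Complex.two_cosh, h, mul_zero]
    rw [eq_neg_of_add_eq_zero_left this, norm_neg]

lemma zderiv (ν γ k : ℂ) (U : ℂ) (p P : Fin 2 → ℂ) (z : ℝ) (hz : (z : ℂ) ≠ 0) (hγ : γ ≠ 0)
    (hk : k ≠ 0) (hs : Complex.sinh (γ * z) ≠ 0) (hc : Complex.cosh (γ * z) ≠ 0) :
    HasDerivAt (fun z : ℝ => Complex.exp (-(Complex.I * ν * (z : ℂ))) *
        (γ / (k * (z : ℂ) * Complex.sinh (γ * z))) *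
        Complex.exp (U / (γ ^ 2 * (z : ℂ))) *
        Complex.exp (-(Complex.cosh (γ * z) / Complex.sinh (γ * z)) / γ *
            (∑ j : Fin 2, (p j - P j / Complex.cosh (γ * z)) ^ 2)) *
        Complex.exp (-(Complex.sinh (γ * z) / Complex.cosh (γ * z)) / γ *
            (∑ j : Fin 2, (P j) ^ 2)))
      ((Complex.exp (-(Complex.I * ν * (z : ℂ))) *
        (γ / (k * (z : ℂ) * Complex.sinh (γ * z))) *
        Complex.exp (U / (γ ^ 2 * (z : ℂ))) *
        Complex.exp (-(Complex.cosh (γ * z) / Complex.sinh (γ * z)) / γ *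
            (∑ j : Fin 2, (p j - P j / Complex.cosh (γ * z)) ^ 2)) *
        Complex.exp (-(Complex.sinh (γ * z) / Complex.cosh (γ * z)) / γ *
            (∑ j : Fin 2, (P j) ^ 2))) *
       (-(Complex.I * ν) + (-1 / z - γ * Complex.cosh (γ * z) / Complex.sinh (γ * z))
        - U / (γ ^ 2 * z ^ 2)
        + ((∑ j : Fin 2, (p j - P j / Complex.cosh (γ * z)) ^ 2) / Complex.sinh (γ * z) ^ 2
          - 2 * (∑ j : Fin 2, (p j - P j / Complex.cosh (γ * z)) * P j) / Complex.cosh (γ * z))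
        - (∑ j : Fin 2, (P j) ^ 2) / Complex.cosh (γ * z) ^ 2)) z := by
  have hid : HasDerivAt (fun t : ℝ => (t : ℂ)) 1 z := Complex.ofRealCLM.hasDerivAt
  have hg : HasDerivAt (fun t : ℝ => γ * (t : ℂ)) γ z := by simpa using hid.const_mul γ
  have hS : HasDerivAt (fun t : ℝ => Complex.sinh (γ * (t : ℂ))) (Complex.cosh (γ * z) * γ) z :=
    hd_congr (HasDerivAt.comp (h₂ := Complex.sinh) (h := fun t : ℝ => γ * (t : ℂ)) z (Complex.hasDerivAt_sinh (γ * z)) hg) (fun _ => rfl) rfl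
  have hC : HasDerivAt (fun t : ℝ => Complex.cosh (γ * (t : ℂ))) (Complex.sinh (γ * z) * γ) z :=
    hd_congr (HasDerivAt.comp (h₂ := Complex.cosh) (h := fun t : ℝ => γ * (t : ℂ)) z (Complex.hasDerivAt_cosh (γ * z)) hg) (fun _ => rfl) rfl
  have hsq := Complex.cosh_sq (γ * z)
  have e0 : HasDerivAt (fun z : ℝ => -(Complex.I * ν * (z : ℂ))) (-(Complex.I * ν)) z := by
    exact hd_congr (hid.const_mul (Complex.I * ν)).neg (fun _ => rfl) (by simp)
  have e1 : HasDerivAt (fun z : ℝ => γ / (k * (z : ℂ) * Complex.sinh (γ * z)))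
      (γ / (k * (z : ℂ) * Complex.sinh (γ * z)) *
        (-1 / z - γ * Complex.cosh (γ * z) / Complex.sinh (γ * z))) z := by
    refine hd_congr ((hasDerivAt_const z γ).div ((hid.const_mul k).mul hS) (by simp [hk, hz, hs])) (fun t => rfl) ?_
    simp only [Pi.mul_apply]
    field_simp
    ring
  have e2 : HasDerivAt (fun z : ℝ => U / (γ ^ 2 * (z : ℂ))) (- U / (γ ^ 2 * z ^ 2)) z := by
    refine hd_congr ((hasDerivAt_const z U).div (hid.const_mul (γ ^ 2)) (by simp [hγ, hz])) (fun t => rfl) ?_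
    field_simp
    ring
  have e3 : HasDerivAt (fun z : ℝ => -(Complex.cosh (γ * z) / Complex.sinh (γ * z)) / γ *
            (∑ j : Fin 2, (p j - P j / Complex.cosh (γ * z)) ^ 2))
      ((∑ j : Fin 2, (p j - P j / Complex.cosh (γ * z)) ^ 2) / Complex.sinh (γ * z) ^ 2
          - 2 * (∑ j : Fin 2, (p j - P j / Complex.cosh (γ * z)) * P j) / Complex.cosh (γ * z)) z := by
    have a := ((hC.div hS hs).neg).div_const γ
    have b : ∀ j : Fin 2, HasDerivAt (fun z : ℝ => (p j - P j / Complex.cosh (γ * z)) ^ 2)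
        (2 * (p j - P j / Complex.cosh (γ * z)) * (P j * γ * Complex.sinh (γ * z) / Complex.cosh (γ * z) ^ 2)) z := by
      intro j
      refine hd_congr ((((hasDerivAt_const z (P j)).div hC hc).const_sub (p j)).pow 2) (fun t => rfl) ?_
      simp
      ring
    simp only [Fin.sum_univ_two]
    refine hd_congr (a.mul ((b 0).add (b 1))) (fun t => rfl) ?_
    simp
    field_simp
    rw [hsq]
    ring
  have e4 : HasDerivAt (fun z : ℝ => -(Complex.sinh (γ * z) / Complex.cosh (γ * z)) / γ *
            (∑ j : Fin 2, (P j) ^ 2))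
      (-(∑ j : Fin 2, (P j) ^ 2) / Complex.cosh (γ * z) ^ 2) z := by
    refine hd_congr ((((hS.div hC hc).neg).div_const γ).mul_const (∑ j : Fin 2, (P j) ^ 2)) (fun t => rfl) ?_
    field_simp
    rw [hsq]
    ring
  refine hd_congr ((((e0.cexp.mul e1).mul e2.cexp).mul e3.cexp).mul e4.cexp) (fun t => rfl) ?_
  simp only [Pi.mul_apply]
  ring

/-- The closed-form Green function of the paraxial two-frequency
geometrical radiative transfer equation in normalized variables. With `γ = (1+i)√(2β)`
(so `γ² = 4iβ`), `sinh(γz) ≠ 0` and `cosh(γz) ≠ 0` for `z > 0`, and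
`G(z,x,y) = e^{−iν₀z} (γ/((2π)² z sinh(γz))) exp(|y−βx−(y'−βx')|²/(γ²z))
  exp(−(coth(γz)/γ)|y+βx−(y'+βx')/cosh(γz)|²) exp(−(tanh(γz)/γ)|y'+βx'|²)`
is smooth on `z > 0` and satisfies
`∂_z G − i ∑_j ∂²G/∂y_j∂x_j + iν₀G + |y+βx|² G = 0` there; the quadratic form `|v|²` on
complexified vectors is `∑_j v_j²`. -/
theorem paraxial_green_function
    (β : ℝ) (hβ : 0 < β) (ν₀ : ℂ) (x' y' : EuclideanSpace ℝ (Fin 2))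
    (γ : ℂ) (hγ : γ = (1 + Complex.I) * (Real.sqrt (2 * β) : ℂ))
    (G : ℝ → EuclideanSpace ℝ (Fin 2) → EuclideanSpace ℝ (Fin 2) → ℂ)
    (hG : ∀ (z : ℝ) (x y : EuclideanSpace ℝ (Fin 2)), G z x y =
      Complex.exp (-(Complex.I * ν₀ * (z : ℂ))) *
        (γ / (((2 * Real.pi) ^ 2 : ℝ) * (z : ℂ) * Complex.sinh (γ * z))) *
        Complex.exp
          ((∑ j : Fin 2, (((y j - β * x j - (y' j - β * x' j) : ℝ)) : ℂ) ^ 2) /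
            (γ ^ 2 * (z : ℂ))) *
        Complex.exp
          (-(Complex.cosh (γ * z) / Complex.sinh (γ * z)) / γ *
            (∑ j : Fin 2,
              (((y j + β * x j : ℝ) : ℂ) -
                  ((y' j + β * x' j : ℝ) : ℂ) / Complex.cosh (γ * z)) ^ 2)) *
        Complex.exp
          (-(Complex.sinh (γ * z) / Complex.cosh (γ * z)) / γ *
            (∑ j : Fin 2, (((y' j + β * x' j : ℝ)) : ℂ) ^ 2))) :
    γ ^ 2 = 4 * Complex.I * (β : ℂ) ∧
    (∀ z : ℝ, 0 < z → Complex.sinh (γ * z) ≠ 0 ∧ Complex.cosh (γ * z) ≠ 0) ∧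
    ContDiffOn ℝ (⊤ : ℕ∞)
      (fun q : ℝ × EuclideanSpace ℝ (Fin 2) × EuclideanSpace ℝ (Fin 2) =>
        G q.1 q.2.1 q.2.2)
      (Set.Ioi (0 : ℝ) ×ˢ (Set.univ : Set (EuclideanSpace ℝ (Fin 2) × EuclideanSpace ℝ (Fin 2)))) ∧
    (∀ z : ℝ, 0 < z → ∀ x y : EuclideanSpace ℝ (Fin 2),
      deriv (fun z' => G z' x y) z
          - Complex.I *
            (∑ j : Fin 2,
              fderiv ℝ (fun y'' => fderiv ℝ (fun x'' => G z x'' y'') x (EuclideanSpace.single j 1))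
                y (EuclideanSpace.single j 1))
          + Complex.I * ν₀ * G z x y
          + ((‖y + β • x‖ ^ 2 : ℝ) : ℂ) * G z x y = 0) := by
  have hg2 : γ ^ 2 = 4 * Complex.I * (β : ℂ) := by
    have h : ((Real.sqrt (2 * β) : ℝ) : ℂ) ^ 2 = 2 * β := by
      rw [← Complex.ofReal_pow, Real.sq_sqrt (by positivity)]
      push_cast
      ring
    rw [hγ, mul_pow, h]
    linear_combination (2 * β : ℂ) * Complex.I_sq
  have hβ' : (β : ℂ) ≠ 0 := by exact_mod_cast hβ.ne'
  have hγ0 : γ ≠ 0 := by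
    intro h
    rw [h] at hg2
    simp [hβ'] at hg2
  have hne : ∀ z : ℝ, 0 < z → Complex.sinh (γ * z) ≠ 0 ∧ Complex.cosh (γ * z) ≠ 0 := by
    intro z hz
    apply sc_ne
    have : 0 < Real.sqrt (2 * β) := Real.sqrt_pos.mpr (by positivity)
    rw [hγ]
    simp
    positivity
  have hpi : (((2 * Real.pi) ^ 2 : ℝ) : ℂ) ≠ 0 := by
    have := Real.pi_pos
    exact_mod_cast (by positivity : ((2 * Real.pi) ^ 2 : ℝ) ≠ 0)
  refine ⟨hg2, hne, ?_, ?_⟩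
  · simp_rw [hG]
    rintro ⟨z, x, y⟩ ⟨hz, -⟩
    have hz : 0 < z := hz
    obtain ⟨hs, hc⟩ := hne z hz
    have hz' : (z : ℂ) ≠ 0 := by exact_mod_cast hz.ne'
    apply ContDiffAt.contDiffWithinAt
    have hor : ContDiff ℝ (⊤ : ℕ∞) (fun t : ℝ => (t : ℂ)) := Complex.ofRealCLM.contDiff
    have hZ : ContDiff ℝ (⊤ : ℕ∞) (fun q : ℝ × EuclideanSpace ℝ (Fin 2) × EuclideanSpace ℝ (Fin 2) => (q.1 : ℂ)) :=
      hor.comp contDiff_fst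
    have hX : ∀ j : Fin 2, ContDiff ℝ (⊤ : ℕ∞) (fun q : ℝ × EuclideanSpace ℝ (Fin 2) × EuclideanSpace ℝ (Fin 2) => q.2.1 j) := by
      intro j; fun_prop
    have hY : ∀ j : Fin 2, ContDiff ℝ (⊤ : ℕ∞) (fun q : ℝ × EuclideanSpace ℝ (Fin 2) × EuclideanSpace ℝ (Fin 2) => q.2.2 j) := by
      intro j; fun_prop
    have hU : ∀ j : Fin 2, ContDiff ℝ (⊤ : ℕ∞) (fun q : ℝ × EuclideanSpace ℝ (Fin 2) × EuclideanSpace ℝ (Fin 2) => ((q.2.2 j - β * q.2.1 j - (y' j - β * x' j) : ℝ) : ℂ)) :=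
      fun j => hor.comp (((hY j).sub (contDiff_const.mul (hX j))).sub contDiff_const)
    have hW : ∀ j : Fin 2, ContDiff ℝ (⊤ : ℕ∞) (fun q : ℝ × EuclideanSpace ℝ (Fin 2) × EuclideanSpace ℝ (Fin 2) => ((q.2.2 j + β * q.2.1 j : ℝ) : ℂ)) :=
      fun j => hor.comp ((hY j).add (contDiff_const.mul (hX j)))
    have hgz := (contDiff_const (c := γ)).mul hZ
    have hS : ContDiffAt ℝ (⊤ : ℕ∞) (fun q : ℝ × EuclideanSpace ℝ (Fin 2) × EuclideanSpace ℝ (Fin 2) => Complex.sinh (γ * (q.1 : ℂ))) (z, x, y) := ((Complex.contDiff_sinh.restrict_scalars ℝ).comp hgz).contDiffAt (x := (z, x, y))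
    have hC : ContDiffAt ℝ (⊤ : ℕ∞) (fun q : ℝ × EuclideanSpace ℝ (Fin 2) × EuclideanSpace ℝ (Fin 2) => Complex.cosh (γ * (q.1 : ℂ))) (z, x, y) := ((Complex.contDiff_cosh.restrict_scalars ℝ).comp hgz).contDiffAt (x := (z, x, y))
    have hZ' := hZ.contDiffAt (x := (z, x, y))
    refine ((((ContDiffAt.mul ?_ ?_).mul ?_).mul ?_).mul ?_)
    · exact ((contDiffAt_const.mul hZ').neg).cexp
    · exact cdiv contDiffAt_const ((contDiffAt_const.mul hZ').mul hS) (mul_ne_zero (mul_ne_zero hpi hz') hs)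
    · refine ContDiffAt.cexp (cdiv (ContDiffAt.sum fun j _ => ((hU j).contDiffAt.pow 2)) (contDiffAt_const.mul hZ') ?_)
      simp [hγ0, hz']
    · refine ContDiffAt.cexp (ContDiffAt.mul (cdiv (cdiv hC hS hs).neg contDiffAt_const hγ0) (ContDiffAt.sum fun j _ => ?_))
      exact ((hW j).contDiffAt.sub (cdiv contDiffAt_const hC hc)).pow 2
    · exact ContDiffAt.cexp (ContDiffAt.mul (cdiv (cdiv hS hC hc).neg contDiffAt_const hγ0) contDiffAt_const)
  · intro z hz x y
    obtain ⟨hs, hc⟩ := hne z hz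
    have hz' : (z : ℂ) ≠ 0 := by exact_mod_cast hz.ne'
    have hd := zderiv ν₀ γ _ (∑ j : Fin 2, (((y j - β * x j - (y' j - β * x' j) : ℝ)) : ℂ) ^ 2)
      (fun j => ((y j + β * x j : ℝ) : ℂ)) (fun j => ((y' j + β * x' j : ℝ) : ℂ)) z hz' hγ0 hpi hs hc
    have hfun : (fun z' => G z' x y) = _ := funext fun z' => hG z' x y
    have hder := hd.deriv
    simp only at hder
    rw [← hfun, ← hG z x y] at hder
    rw [hder]
    have hgen : ∀ x y, G z x y = (Complex.exp (-(Complex.I * ν₀ * (z : ℂ))) *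
        (γ / (((2 * Real.pi) ^ 2 : ℝ) * (z : ℂ) * Complex.sinh (γ * z))) *
        Complex.exp
          (-(Complex.sinh (γ * z) / Complex.cosh (γ * z)) / γ *
            (∑ j : Fin 2, (((y' j + β * x' j : ℝ)) : ℂ) ^ 2))) *
        Complex.exp (gq (1 / (γ ^ 2 * z)) (-(Complex.cosh (γ * z) / Complex.sinh (γ * z)) / γ) β
          (fun j => ((y' j - β * x' j : ℝ) : ℂ))
          (fun j => ((y' j + β * x' j : ℝ) : ℂ) / Complex.cosh (γ * z)) x y) := by
      intro x y
      rw [hG, gq, Complex.exp_add]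
      have : (∑ j : Fin 2, (((y j - β * x j - (y' j - β * x' j) : ℝ)) : ℂ) ^ 2) /
            (γ ^ 2 * (z : ℂ)) = 1 / (γ ^ 2 * z) * ∑ j : Fin 2, ((y j : ℂ) - β * (x j : ℂ) - ((y' j - β * x' j : ℝ) : ℂ)) ^ 2 := by
        push_cast
        ring
      rw [this]
      push_cast
      ring
    have hm : ∀ j : Fin 2, fderiv ℝ (fun y'' => fderiv ℝ (fun x'' => G z x'' y'') x (EuclideanSpace.single j 1))
                y (EuclideanSpace.single j 1) = G z x y *
        (β * (4 * (-(Complex.cosh (γ * z) / Complex.sinh (γ * z)) / γ) ^ 2 * ((y j : ℂ) + β * (x j : ℂ) - ((y' j + β * x' j : ℝ) : ℂ) / Complex.cosh (γ * z)) ^ 2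
        - 4 * (1 / (γ ^ 2 * z)) ^ 2 * ((y j : ℂ) - β * (x j : ℂ) - ((y' j - β * x' j : ℝ) : ℂ)) ^ 2) + β * (2 * (-(Complex.cosh (γ * z) / Complex.sinh (γ * z)) / γ) - 2 * (1 / (γ ^ 2 * z)))) := by
      intro j
      simp_rw [hgen]
      exact mixed _ _ _ _ _ _ _ _ _
    simp_rw [hm]
    have hnorm : ((‖y + β • x‖ ^ 2 : ℝ) : ℂ) = ∑ j : Fin 2, ((y j + β * x j : ℝ) : ℂ) ^ 2 := by
      rw [EuclideanSpace.norm_sq_eq]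
      simp
    rw [hnorm]
    generalize G z x y = g
    have hsq := Complex.cosh_sq (γ * z)
    simp only [Fin.sum_univ_two]
    push_cast
    generalize Complex.cosh (γ * z) = c at *
    generalize Complex.sinh (γ * z) = s at *
    have hb : (β : ℂ) * Complex.I = γ ^ 2 / 4 := by rw [hg2]; ring
    have key : ∀ u0 u1 p0 p1 P0 P1 : ℂ,
        (-(Complex.I * ν₀) + (-1 / z - γ * c / s) - (u0 ^ 2 + u1 ^ 2) / (γ ^ 2 * z ^ 2)
          + (((p0 - P0 / c) ^ 2 + (p1 - P1 / c) ^ 2) / s ^ 2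
            - 2 * ((p0 - P0 / c) * P0 + (p1 - P1 / c) * P1) / c) - (P0 ^ 2 + P1 ^ 2) / c ^ 2)
        - γ ^ 2 / 4 * ((4 * (-(c / s) / γ) ^ 2 * (p0 - P0 / c) ^ 2 - 4 * (1 / (γ ^ 2 * z)) ^ 2 * u0 ^ 2
            + (2 * (-(c / s) / γ) - 2 * (1 / (γ ^ 2 * z))))
          + (4 * (-(c / s) / γ) ^ 2 * (p1 - P1 / c) ^ 2 - 4 * (1 / (γ ^ 2 * z)) ^ 2 * u1 ^ 2
            + (2 * (-(c / s) / γ) - 2 * (1 / (γ ^ 2 * z)))))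
        + Complex.I * ν₀ + (p0 ^ 2 + p1 ^ 2) = 0 := by
      intro u0 u1 p0 p1 P0 P1
      obtain ⟨w0, h0⟩ : ∃ w, w = p0 - P0 / c := ⟨_, rfl⟩
      obtain ⟨w1, h1⟩ : ∃ w, w = p1 - P1 / c := ⟨_, rfl⟩
      have h0' : p0 = w0 + P0 / c := by rw [h0]; ring
      have h1' : p1 = w1 + P1 / c := by rw [h1]; ring
      rw [← h0, ← h1, h0', h1']
      have e : (1 / s ^ 2 + 1 - c ^ 2 / s ^ 2 : ℂ) = 0 := by
        rw [hsq]; field_simp; ring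
      linear_combination (norm := skip) (w0 ^ 2 + w1 ^ 2) * e
      field_simp
      ring
    have := key ((y 0 : ℂ) - β * x 0 - (y' 0 - β * x' 0)) ((y 1 : ℂ) - β * x 1 - (y' 1 - β * x' 1))
      ((y 0 : ℂ) + β * x 0) ((y 1 : ℂ) + β * x 1) ((y' 0 : ℂ) + β * x' 0) ((y' 1 : ℂ) + β * x' 1)
    rw [← hb] at this
    linear_combination g * this
end
end

section
/- Let k > 0, C > 0, β ∈ ℝ, ν₀ ∈ ℂ, and let W̄, S : ℝ³ × ℝ³ → ℂ be smooth functions satisfying, for all x ∈ ℝ³ and all p ∈ ℝ³ with p ≠ 0, the two-frequency geometrical radiative transfer equation p·∇ₓW̄ + iν₀W̄ − S = (1/(4k)) (∇_p − iβx) · ( C|p|⁻¹ Π(p) (∇_p − iβx) W̄ ), where Π(p) = I − (p⊗p)/|p|². Set a = (C/4)^{1/3} k^{−1/3} and β̃ = a²β = (C/4)^{2/3} k^{−2/3} β, and define W̃(x̃,p̃) = W̄(a x̃, a p̃) and S̃(x̃,p̃) = S(a x̃, a p̃). Then W̃ satisfies, for all x̃ ∈ ℝ³ and p̃ ≠ 0,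 the parameter-free standard form p̃·∇_x̃ W̃ + iν₀ W̃ − S̃ = (∇_p̃ − iβ̃x̃) · ( |p̃|⁻¹ Π(p̃) (∇_p̃ − iβ̃x̃) W̃ ). (In particular, in the paper's convention x = σₓ k x̃, p = σ_p p̃/k, the spatial spread is σₓ = (C/4)^{1/3} k^{−4/3}, the spatial-frequency spread is σ_p = (C/4)^{1/3} k^{2/3}, and the coherence bandwidth is β_c = (4/C)^{2/3} k^{2/3}.) -/
open MeasureTheory Complex Filter
open scoped RealInnerProductSpace Topology

noncomputable section

/-- The matrix of the orthogonal projection `Π(p) = I − p⊗p/|p|²` onto the plane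
orthogonal to `p ∈ ℝ³`, entrywise. -/
def projMat (p : EuclideanSpace ℝ (Fin 3)) (j l : Fin 3) : ℝ :=
  (if j = l then 1 else 0) - p j * p l / ‖p‖ ^ 2

/-- The shifted gradient `(∇_p − iβx)W` in the momentum variable, componentwise. -/
def shiftGrad (β : ℝ) (W : EuclideanSpace ℝ (Fin 3) → EuclideanSpace ℝ (Fin 3) → ℂ)
    (x p : EuclideanSpace ℝ (Fin 3)) (l : Fin 3) : ℂ :=
  fderiv ℝ (fun p' => W x p') p (EuclideanSpace.single l 1)
    - Complex.I * (β : ℂ) * ((x l : ℝ) : ℂ) * W x p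

/-- The vector field `C|p|⁻¹ Π(p) (∇_p − iβx)W`, componentwise. -/
def diffVec (Cc β : ℝ) (W : EuclideanSpace ℝ (Fin 3) → EuclideanSpace ℝ (Fin 3) → ℂ)
    (x p : EuclideanSpace ℝ (Fin 3)) (j : Fin 3) : ℂ :=
  ∑ l : Fin 3, ((Cc * ‖p‖⁻¹ * projMat p j l : ℝ) : ℂ) * shiftGrad β W x p l

/-- The shifted divergence `(∇_p − iβx)·(C|p|⁻¹ Π(p)(∇_p − iβx)W)` appearing on the
right-hand side of the two-frequency geometrical radiative transfer equation. -/
def grtDiv (Cc β : ℝ) (W : EuclideanSpace ℝ (Fin 3) → EuclideanSpace ℝ (Fin 3) → ℂ)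
    (x p : EuclideanSpace ℝ (Fin 3)) : ℂ :=
  ∑ j : Fin 3,
    (fderiv ℝ (fun p' => diffVec Cc β W x p' j) p (EuclideanSpace.single j 1)
      - Complex.I * (β : ℂ) * ((x j : ℝ) : ℂ) * diffVec Cc β W x p j)

theorem aux_fderiv (a c : ℝ) (f g : EuclideanSpace ℝ (Fin 3) → ℂ)
    (h : ∀ p, g p = (c : ℂ) * f (a • p)) (p v : EuclideanSpace ℝ (Fin 3)) :
    fderiv ℝ g p v = ((c * a : ℝ) : ℂ) * fderiv ℝ f (a • p) v := by
  have hg : g = c • (fun p => f (a • p)) := by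
    funext p; simp [h]
  rw [hg, fderiv_const_smul_field, Pi.smul_apply, fderiv_comp_smul]
  simp [mul_assoc]

theorem aux_proj (a : ℝ) (ha : 0 < a) (p : EuclideanSpace ℝ (Fin 3)) (j l : Fin 3) :
    projMat (a • p) j l = projMat p j l := by
  unfold projMat
  congr 1
  rw [norm_smul, Real.norm_of_nonneg ha.le, mul_pow]
  simp only [PiLp.smul_apply, smul_eq_mul]
  rw [show a * p j * (a * p l) = a ^ 2 * (p j * p l) by ring]
  exact mul_div_mul_left _ _ (by positivity)

theorem aux_shift (a β : ℝ) (W V : EuclideanSpace ℝ (Fin 3) → EuclideanSpace ℝ (Fin 3) → ℂ)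
    (h : ∀ x p, V x p = W (a • x) (a • p)) (x p : EuclideanSpace ℝ (Fin 3)) (l : Fin 3) :
    shiftGrad (a ^ 2 * β) V x p l = (a : ℂ) * shiftGrad β W (a • x) (a • p) l := by
  unfold shiftGrad
  rw [aux_fderiv a 1 (fun p' => W (a • x) p') (fun p' => V x p') (by intro p; simp [h]), h]
  simp only [PiLp.smul_apply, smul_eq_mul]
  push_cast
  ring

theorem aux_diff (a C β : ℝ) (ha : 0 < a) (hC : 0 < C)
    (W V : EuclideanSpace ℝ (Fin 3) → EuclideanSpace ℝ (Fin 3) → ℂ)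
    (h : ∀ x p, V x p = W (a • x) (a • p)) (x p : EuclideanSpace ℝ (Fin 3)) (j : Fin 3) :
    diffVec 1 (a ^ 2 * β) V x p j
      = ((a ^ 2 / C : ℝ) : ℂ) * diffVec C β W (a • x) (a • p) j := by
  unfold diffVec
  rw [Finset.mul_sum]
  refine Finset.sum_congr rfl fun l _ => ?_
  rw [aux_shift a β W V h, aux_proj a ha, ← mul_assoc, ← mul_assoc, ← Complex.ofReal_mul,
    ← Complex.ofReal_mul]
  congr 2
  rw [norm_smul, Real.norm_of_nonneg ha.le, mul_inv]
  field_simp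

theorem aux_div (a C β : ℝ) (ha : 0 < a) (hC : 0 < C)
    (W V : EuclideanSpace ℝ (Fin 3) → EuclideanSpace ℝ (Fin 3) → ℂ)
    (h : ∀ x p, V x p = W (a • x) (a • p)) (x p : EuclideanSpace ℝ (Fin 3)) :
    grtDiv 1 (a ^ 2 * β) V x p
      = ((a ^ 3 / C : ℝ) : ℂ) * grtDiv C β W (a • x) (a • p) := by
  unfold grtDiv
  rw [Finset.mul_sum]
  refine Finset.sum_congr rfl fun j _ => ?_
  rw [aux_fderiv a (a ^ 2 / C) (fun p' => diffVec C β W (a • x) p' j)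
    (fun p' => diffVec 1 (a ^ 2 * β) V x p' j)
    (fun p => aux_diff a C β ha hC W V h x p j), aux_diff a C β ha hC W V h]
  simp only [PiLp.smul_apply, smul_eq_mul]
  push_cast
  ring

/-- Rescaling the two-frequency geometrical radiative transfer equation
`p·∇ₓW̄ + iν₀W̄ − S = (1/(4k))(∇_p − iβx)·(C|p|⁻¹Π(p)(∇_p − iβx)W̄)` by
`a = (C/4)^{1/3} k^{−1/3}` and `β̃ = a²β` brings it to the parameter-free standard form
`p̃·∇_x̃W̃ + iν₀W̃ − S̃ = (∇_p̃ − iβ̃x̃)·(|p̃|⁻¹Π(p̃)(∇_p̃ − iβ̃x̃)W̃)`; in particular the spatial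
spread is `σₓ = (C/4)^{1/3}k^{−4/3}`, the spatial-frequency spread is
`σ_p = (C/4)^{1/3}k^{2/3}` (with `σₓ k = a`, `σ_p/k = a`), and the coherence bandwidth is
`β_c = (4/C)^{2/3}k^{2/3}` (with `β̃ = β/β_c`). -/
theorem grt_rescaling_standard_form
    (k C : ℝ) (hk : 0 < k) (hC : 0 < C) (β : ℝ) (ν₀ : ℂ)
    (Wb S : EuclideanSpace ℝ (Fin 3) → EuclideanSpace ℝ (Fin 3) → ℂ)
    (hWsmooth : ContDiff ℝ (⊤ : ℕ∞)
      (fun q : EuclideanSpace ℝ (Fin 3) × EuclideanSpace ℝ (Fin 3) => Wb q.1 q.2))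
    (hSsmooth : ContDiff ℝ (⊤ : ℕ∞)
      (fun q : EuclideanSpace ℝ (Fin 3) × EuclideanSpace ℝ (Fin 3) => S q.1 q.2))
    (heq : ∀ x p : EuclideanSpace ℝ (Fin 3), p ≠ 0 →
      fderiv ℝ (fun x' => Wb x' p) x p + Complex.I * ν₀ * Wb x p - S x p
        = ((1 / (4 * k) : ℝ) : ℂ) * grtDiv C β Wb x p)
    (a βt : ℝ)
    (ha : a = (C / 4) ^ ((1 : ℝ) / 3) * k ^ (-(1 : ℝ) / 3))
    (hβt : βt = a ^ 2 * β)
    (Wt St : EuclideanSpace ℝ (Fin 3) → EuclideanSpace ℝ (Fin 3) → ℂ)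
    (hWt : ∀ xt pt, Wt xt pt = Wb (a • xt) (a • pt))
    (hSt : ∀ xt pt, St xt pt = S (a • xt) (a • pt)) :
    (∀ xt pt : EuclideanSpace ℝ (Fin 3), pt ≠ 0 →
      fderiv ℝ (fun x' => Wt x' pt) xt pt + Complex.I * ν₀ * Wt xt pt - St xt pt
        = grtDiv 1 βt Wt xt pt)
    ∧ ((C / 4) ^ ((1 : ℝ) / 3) * k ^ (-(4 : ℝ) / 3)) * k = a
    ∧ ((C / 4) ^ ((1 : ℝ) / 3) * k ^ ((2 : ℝ) / 3)) / k = a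
    ∧ βt = β / ((4 / C) ^ ((2 : ℝ) / 3) * k ^ ((2 : ℝ) / 3)) := by
  have hC4 : 0 < C / 4 := by positivity
  have hapos : 0 < a := by rw [ha]; positivity
  have ha3 : a ^ 3 = C / (4 * k) := by
    rw [ha, mul_pow, ← Real.rpow_natCast, ← Real.rpow_natCast, ← Real.rpow_mul hC4.le,
      ← Real.rpow_mul hk.le]
    norm_num
    rw [Real.rpow_neg_one]
    field_simp
  refine ⟨fun x p hp => ?_, ?_, ?_, ?_⟩
  · have hap : a • p ≠ 0 := smul_ne_zero hapos.ne' hp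
    have h1 := heq (a • x) (a • p) hap
    rw [hβt, aux_div a C β hapos hC Wb Wt hWt, ha3,
      show C / (4 * k) / C = 1 / (4 * k) by field_simp, ← h1,
      aux_fderiv a 1 (fun x' => Wb x' (a • p)) (fun x' => Wt x' p) (by intro x; simp [hWt]),
      hWt, hSt, map_smul]
    simp
  · rw [ha, mul_assoc]
    congr 1
    rw [← Real.rpow_add_one hk.ne']
    norm_num
  · rw [ha, mul_div_assoc]
    congr 1
    rw [← Real.rpow_sub_one hk.ne']
    norm_num
  · rw [hβt, ha, mul_pow, ← Real.rpow_natCast, ← Real.rpow_natCast, ← Real.rpow_mul hC4.le,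
      ← Real.rpow_mul hk.le, show (4 / C) = (C / 4)⁻¹ by rw [inv_div],
      Real.inv_rpow hC4.le,
      show (-(1:ℝ) / 3 * ((2:ℕ):ℝ)) = -((2:ℝ)/3) by norm_num,
      show ((1:ℝ) / 3 * ((2:ℕ):ℝ)) = (2:ℝ)/3 by norm_num, Real.rpow_neg hk.le]
    have := Real.rpow_pos_of_pos hC4 (2/3)
    have := Real.rpow_pos_of_pos hk (2/3)
    generalize (C / 4) ^ ((2:ℝ)/3) = u at *
    generalize k ^ ((2:ℝ)/3) = v at *
    field_simp
end
end
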